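/- Let S ⊂ X with S ∩ (−S) = ∅, t = μ(S), f = 1_S − 1_{−S}. Then for any v ∈ ℝ^n, I_p(v,f) ≤ B_p max{(2t)^{1/p}, (2t)^{1/2}} (Σ_{i=1}^n v_i^2)^{1/2}, where B_p = max{1, 2^{1/2−1/p}, 2^{1/2}(Γ((p+1)/2)/√π)^{1/p}} is the optimal upper Khintchine constant. -/

import Mathlib

open MeasureTheory

/-
The terms `Y i = f (x i) * v i` are independent and symmetric, with `|Y i| ≤ |v i|` and
`E (Y i ^ 2) = τ * v i ^ 2` for `τ = 2 * μ S`. For `p ≤ 2` the bound is Jensen's inequality applied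
to the second moment of their sum. For `p > 2`, inserting independent signs does not change the
`p`-th moment of the sum, and Khintchine's inequality for fixed values of the `Y i` bounds it by
`E (|g| ^ p) * E ((∑ Y i ^ 2) ^ (p / 2))`, where `g` is a standard Gaussian. Since `∑ Y i ^ 2` is
at most `∑ v i ^ 2` and has mean `τ * ∑ v i ^ 2`, the last factor is at most
`τ * (∑ v i ^ 2) ^ (p / 2)`.

Khintchine's inequality `E (|∑ ε i * a i| ^ p) ≤ E (|g| ^ p)` for `∑ a i ^ 2 = 1` has three regimes.
* If `3 ≤ p`, then `u ↦ |y + √u| ^ p + |y - √u| ^ p` is convex, so by Jensen each sign can be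
  exchanged for a Gaussian of the same variance.
* If `p < 3` and `∑ a i ^ 4 ≥ (25 / 36) ^ 2`, the fourth moment of the sum is so small that
  interpolation between the second and the fourth moment suffices.
* Otherwise `a i ^ 2 ≤ 25 / 36` for all `i`. The `p`-th moment of a random variable `X` of
  variance one is a multiple of `∫ (E (cos (t * X)) - 1 + t ^ 2 / 2) / t ^ (p + 1)`, and
  weighted AM-GM bounds the characteristic function `∏ cos (t * a i)` by
  `∑ a i ^ 2 * |cos (t * a i)| ^ (1 / a i ^ 2)`. It remains to compare `|cos u| ^ s` with
  `exp (-s * u ^ 2 / 2)` for `s ≥ 36 / 25` under the weight `u ^ (-(p + 1))`. The two curves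
  cross only once on `(0, π]`, which reduces the comparison to the weight `u ^ (-3)`.
-/

namespace Khintchine

open Real Finset ProbabilityTheory
open scoped BigOperators NNReal

section RademacherMean

variable {ι : Type*} [Fintype ι] [DecidableEq ι]

/-- The mean `𝔼 φ(∑ i ∈ s, ε i * a i)` over independent uniform signs `ε i`. The signs are indexed
by all of `ι` rather than by `s`, so that the recursion over `s` stays in one sample space. -/
noncomputable def rademacherMean (s : Finset ι) (a : ι → ℝ) (φ : ℝ → ℝ) : ℝ :=
  𝔼 ε : ι → ℤˣ, φ (∑ i ∈ s, ε i • a i)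

theorem rademacherMean_empty (a : ι → ℝ) (φ : ℝ → ℝ) : rademacherMean ∅ a φ = φ 0 := by
  simp [rademacherMean]

theorem rademacherMean_const (s : Finset ι) (a : ι → ℝ) (c : ℝ) :
    rademacherMean s a (fun _ => c) = c :=
  Fintype.expect_const c

theorem rademacherMean_add (s : Finset ι) (a : ι → ℝ) (φ ψ : ℝ → ℝ) :
    rademacherMean s a (fun x => φ x + ψ x) = rademacherMean s a φ + rademacherMean s a ψ :=
  expect_add_distrib ..

theorem rademacherMean_const_mul (s : Finset ι) (a : ι → ℝ) (c : ℝ) (φ : ℝ → ℝ) :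
    rademacherMean s a (fun x => c * φ x) = c * rademacherMean s a φ :=
  (mul_expect ..).symm

theorem rademacherMean_mono (s : Finset ι) (a : ι → ℝ) {φ ψ : ℝ → ℝ} (h : ∀ x, φ x ≤ ψ x) :
    rademacherMean s a φ ≤ rademacherMean s a ψ :=
  expect_le_expect fun _ _ => h _

theorem rademacherMean_smul (s : Finset ι) (a : ι → ℝ) (c : ℝ) (φ : ℝ → ℝ) :
    rademacherMean s (c • a) φ = rademacherMean s a (fun x => φ (c * x)) := by
  simp only [rademacherMean, mul_sum, Pi.smul_apply, smul_eq_mul, mul_smul_comm]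

theorem rademacherMean_insert {s : Finset ι} {i : ι} (hi : i ∉ s) (a : ι → ℝ) (φ : ℝ → ℝ) :
    rademacherMean (insert i s) a φ =
      rademacherMean s a (fun x => (φ (a i + x) + φ (-a i + x)) / 2) := by
  let flip : (ι → ℤˣ) ≃ (ι → ℤˣ) := Equiv.mulLeft (Pi.mulSingle i (-1))
  have flip_self (ε : ι → ℤˣ) : flip ε i = -ε i := by simp [flip]
  have flip_of_mem (ε : ι → ℤˣ) {j : ι} (hj : j ∈ s) : flip ε j = ε j := by
    simp [flip, Pi.mulSingle_eq_of_ne (ne_of_mem_of_not_mem hj hi)]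
  have hflip : rademacherMean (insert i s) a φ = 𝔼 ε, φ (∑ j ∈ insert i s, flip ε j • a j) :=
    (Fintype.expect_equiv flip _ _ fun _ => rfl).symm
  rw [← add_halves (rademacherMean (insert i s) a φ)]
  nth_rw 2 [hflip]
  simp only [rademacherMean, ← expect_div, ← expect_add_distrib, ← add_div]
  refine congrArg (· / 2) (expect_congr rfl fun ε _ => ?_)
  rw [sum_insert hi, sum_insert hi, flip_self,
    sum_congr rfl fun j hj => congrArg (· • a j) (flip_of_mem ε hj)]
  rcases Int.units_eq_one_or (ε i) with h | h <;> simp [h, Units.smul_def, add_comm]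

theorem rademacherMean_sq (s : Finset ι) (a : ι → ℝ) :
    rademacherMean s a (fun x => x ^ 2) = ∑ i ∈ s, a i ^ 2 := by
  induction s using Finset.induction_on with
  | empty => simp [rademacherMean_empty]
  | insert i s hi ih =>
    have h : (fun x => ((a i + x) ^ 2 + (-a i + x) ^ 2) / 2) = fun x => a i ^ 2 + x ^ 2 := by
      funext x; ring
    rw [rademacherMean_insert hi, h, rademacherMean_add, rademacherMean_const, ih, sum_insert hi]

theorem rademacherMean_pow_four (s : Finset ι) (a : ι → ℝ) :
    rademacherMean s a (fun x => x ^ 4) = 3 * (∑ i ∈ s, a i ^ 2) ^ 2 - 2 * ∑ i ∈ s, a i ^ 4 := by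
  induction s using Finset.induction_on with
  | empty => simp [rademacherMean_empty]
  | insert i s hi ih =>
    have h : (fun x => ((a i + x) ^ 4 + (-a i + x) ^ 4) / 2) =
        fun x => (a i ^ 4 + 6 * a i ^ 2 * x ^ 2) + x ^ 4 := by
      funext x; ring
    rw [rademacherMean_insert hi, h, rademacherMean_add, rademacherMean_add, rademacherMean_const,
      rademacherMean_const_mul, rademacherMean_sq, ih, sum_insert hi, sum_insert hi]
    ring

theorem rademacherMean_cos (s : Finset ι) (a : ι → ℝ) (t : ℝ) :
    rademacherMean s a (fun x => cos (t * x)) = ∏ i ∈ s, cos (t * a i) := by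
  induction s using Finset.induction_on with
  | empty => simp [rademacherMean_empty]
  | insert i s hi ih =>
    have h : (fun x => (cos (t * (a i + x)) + cos (t * (-a i + x))) / 2) =
        fun x => cos (t * a i) * cos (t * x) := by
      funext x
      rw [mul_add, mul_add, mul_neg, cos_add, cos_add, cos_neg, sin_neg]
      ring
    rw [rademacherMean_insert hi, h, rademacherMean_const_mul, ih, prod_insert hi]

end RademacherMean

section Gaussian

variable {p : ℝ}

/-- The absolute moment `E |g|^p` of a standard Gaussian `g`: the `p`-th power of the optimal
constant in the upper Khintchine inequality for `p ≥ 2`. -/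
noncomputable def gaussianAbsMoment (p : ℝ) : ℝ :=
  ∫ y, |y| ^ p ∂gaussianReal 0 1

theorem gaussianAbsMoment_nonneg (p : ℝ) : 0 ≤ gaussianAbsMoment p :=
  integral_nonneg fun _ => by positivity

theorem gaussianAbsMoment_eq (hp : -1 < p) :
    gaussianAbsMoment p = 2 ^ (p / 2) * (Gamma ((p + 1) / 2) / √π) := by
  have hdensity : (fun x : ℝ => gaussianPDFReal 0 1 x • |x| ^ p) =
      fun x => (√(2 * π))⁻¹ * (|x| ^ p * exp (-(1 / 2) * |x| ^ (2 : ℝ))) := by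
    funext x
    rw [gaussianPDFReal, rpow_two, sq_abs, smul_eq_mul, NNReal.coe_one, sub_zero, mul_one, mul_one,
      show -x ^ 2 / 2 = -(1 / 2) * x ^ 2 by ring]
    ring
  rw [gaussianAbsMoment, integral_gaussianReal_eq_integral_smul one_ne_zero, hdensity,
    integral_comp_abs (f := fun y => (√(2 * π))⁻¹ * (y ^ p * exp (-(1 / 2) * y ^ (2 : ℝ)))),
    integral_const_mul, integral_rpow_mul_exp_neg_mul_rpow two_pos hp (by norm_num), neg_div,
    rpow_neg (by norm_num), div_rpow (by norm_num) (by norm_num), one_rpow,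
    show (p + 1) / 2 = p / 2 + 1 / 2 by ring, rpow_add two_pos, sqrt_mul two_pos.le,
    ← sqrt_eq_rpow]
  field_simp

theorem integral_abs_rpow_gaussianReal (hp : 0 ≤ p) (v : ℝ≥0) :
    ∫ y, |y| ^ p ∂gaussianReal 0 v = gaussianAbsMoment p * (v : ℝ) ^ (p / 2) := by
  have hscale : gaussianReal 0 v = (gaussianReal 0 1).map (√v * ·) := by
    rw [gaussianReal_map_const_mul, mul_zero]
    congr 1
    ext
    simp
  have hcont : Continuous fun y : ℝ => |y| ^ p := continuous_abs.rpow_const fun _ => Or.inr hp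
  rw [hscale, integral_map (by fun_prop) hcont.aestronglyMeasurable]
  simp_rw [abs_mul, mul_rpow (abs_nonneg _) (abs_nonneg _)]
  rw [integral_const_mul, abs_of_nonneg (sqrt_nonneg _), sqrt_eq_rpow, ← rpow_mul v.coe_nonneg,
    one_div_mul_eq_div, mul_comm, gaussianAbsMoment]

theorem integrable_abs_add_rpow_gaussianReal (hp : 0 < p) (x : ℝ) (v : ℝ≥0) :
    Integrable (fun y => |x + y| ^ p) (gaussianReal 0 v) := by
  have hmem : MemLp (fun y : ℝ => x + id y) (ENNReal.ofReal p) (gaussianReal 0 v) :=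
    (memLp_const x).add (memLp_id_gaussianReal' _ ENNReal.ofReal_ne_top)
  simpa only [norm_eq_abs, id, ENNReal.toReal_ofReal hp.le] using
    hmem.integrable_norm_rpow (by simpa using hp) ENNReal.ofReal_ne_top

theorem integral_sq_gaussianReal (v : ℝ≥0) : ∫ y, y ^ 2 ∂gaussianReal 0 v = v := by
  rw [← variance_fun_id_gaussianReal (μ := 0) (v := v),
    variance_of_integral_eq_zero aemeasurable_id' integral_id_gaussianReal]

theorem rademacherMean_le_integral_gaussianReal {ι : Type*} [Fintype ι] [DecidableEq ι] {φ : ℝ → ℝ}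
    (hint : ∀ x v, Integrable (fun h => φ (x + h)) (gaussianReal 0 v))
    (hswap : ∀ x a, (φ (x + a) + φ (x - a)) / 2 ≤ ∫ h, φ (x + h) ∂gaussianReal 0 (‖a‖₊ ^ 2))
    (s : Finset ι) (a : ι → ℝ) (x : ℝ) :
    rademacherMean s a (fun y => φ (x + y)) ≤
      ∫ h, φ (x + h) ∂gaussianReal 0 (∑ i ∈ s, ‖a i‖₊ ^ 2) := by
  induction s using Finset.induction_on generalizing x with
  | empty => simp [rademacherMean_empty]
  | insert i s hi ih =>
    set w := ∑ j ∈ s, ‖a j‖₊ ^ 2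
    have hconv : gaussianReal 0 (∑ j ∈ insert i s, ‖a j‖₊ ^ 2) =
        ((gaussianReal 0 w).prod (gaussianReal 0 (‖a i‖₊ ^ 2))).map (fun z => z.1 + z.2) := by
      rw [sum_insert hi, add_comm, ← Measure.conv, gaussianReal_conv_gaussianReal, add_zero]
    have hconv_int := hconv ▸ hint x (∑ j ∈ insert i s, ‖a j‖₊ ^ 2)
    have hprod_int : Integrable (fun z : ℝ × ℝ => φ (x + (z.1 + z.2)))
        ((gaussianReal 0 w).prod (gaussianReal 0 (‖a i‖₊ ^ 2))) :=
      hconv_int.comp_measurable (measurable_fst.add measurable_snd)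
    have hsplit : rademacherMean (insert i s) a (fun y => φ (x + y)) =
        (rademacherMean s a (fun y => φ (x + a i + y)) +
          rademacherMean s a (fun y => φ (x - a i + y))) / 2 := by
      rw [rademacherMean_insert hi, ← rademacherMean_add, div_eq_inv_mul,
        ← rademacherMean_const_mul]
      simp only [div_eq_inv_mul, ← add_assoc, ← sub_eq_add_neg]
    calc rademacherMean (insert i s) a (fun y => φ (x + y))
        ≤ ((∫ h, φ (x + a i + h) ∂gaussianReal 0 w) +
            ∫ h, φ (x - a i + h) ∂gaussianReal 0 w) / 2 := by
          rw [hsplit]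
          gcongr <;> exact ih _
      _ = ∫ h, (φ (x + h + a i) + φ (x + h - a i)) / 2 ∂gaussianReal 0 w := by
          rw [← integral_add (hint _ _) (hint _ _), ← integral_div]
          simp only [sub_eq_add_neg, add_right_comm x]
      _ ≤ ∫ h, ∫ k, φ (x + (h + k)) ∂gaussianReal 0 (‖a i‖₊ ^ 2) ∂gaussianReal 0 w := by
          refine integral_mono ?_ hprod_int.integral_prod_left fun h => ?_
          · simpa only [sub_eq_add_neg, add_right_comm x, Pi.add_apply] using
              ((hint (x + a i) w).add (hint (x - a i) w)).div_const 2
          · simpa only [add_assoc] using hswap (x + h) (a i)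
      _ = ∫ h, φ (x + h) ∂gaussianReal 0 (∑ j ∈ insert i s, ‖a j‖₊ ^ 2) := by
          rw [hconv, integral_map (by fun_prop) hconv_int.aestronglyMeasurable,
            integral_prod _ hprod_int]

end Gaussian

section LargeExponent

theorem hasDerivAt_abs_rpow_mul_self {q : ℝ} (hq : 0 < q) (x : ℝ) :
    HasDerivAt (fun x : ℝ => |x| ^ q * x) ((q + 1) * |x| ^ q) x := by
  rcases eq_or_ne x 0 with rfl | hx
  · have hlim : Filter.Tendsto (fun y : ℝ => |y| ^ q) (nhdsWithin 0 {0}ᶜ) (nhds 0) := by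
      have hcont : Continuous fun y : ℝ => |y| ^ q :=
        continuous_abs.rpow_const fun _ => Or.inr hq.le
      simpa [zero_rpow hq.ne'] using hcont.continuousWithinAt (x := 0) (s := {0}ᶜ) |>.tendsto
    rw [abs_zero, zero_rpow hq.ne', mul_zero, hasDerivAt_iff_tendsto_slope]
    refine hlim.congr' ?_
    filter_upwards [self_mem_nhdsWithin] with y (hy : y ≠ 0)
    simp [slope_def_field, hy]
  · have hprod := ((hasDerivAt_abs hx).rpow_const (p := q) (.inl (abs_ne_zero.2 hx))).mul
      (hasDerivAt_id x)
    convert! hprod using 1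
    rw [id, mul_one, mul_right_comm _ _ x, mul_right_comm _ _ x, sign_mul_self, mul_right_comm,
      ← rpow_one_add' (abs_nonneg x) (by simpa using hq.ne'), add_sub_cancel]
    ring

theorem convexOn_abs_rpow {q : ℝ} (hq : 1 ≤ q) : ConvexOn ℝ Set.univ fun x : ℝ => |x| ^ q := by
  refine ⟨convex_univ, fun a _ b _ s t hs ht hst => ?_⟩
  calc |s • a + t • b| ^ q ≤ (s • |a| + t • |b|) ^ q :=
        rpow_le_rpow (abs_nonneg _)
          (convexOn_univ_norm.2 (Set.mem_univ a) (Set.mem_univ b) hs ht hst) (by linarith)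
    _ ≤ s • |a| ^ q + t • |b| ^ q := (convexOn_rpow hq).2 (abs_nonneg a) (abs_nonneg b) hs ht hst

theorem monotoneOn_of_convexOn_of_even {f : ℝ → ℝ} (hf : ConvexOn ℝ Set.univ f)
    (heven : ∀ x, f (-x) = f x) : MonotoneOn f (Set.Ici 0) := fun x hx y _ hxy => by
  have hx : 0 ≤ x := hx
  simpa only [heven, max_self] using
    hf.le_max_of_mem_Icc (Set.mem_univ (-y)) (Set.mem_univ y) ⟨by linarith, hxy⟩

variable {p : ℝ}

theorem convexOn_abs_rpow_mul_self_sub (hp : 3 ≤ p) (y : ℝ) :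
    ConvexOn ℝ (Set.Ici 0)
      (fun r => |y + r| ^ (p - 2) * (y + r) - |y - r| ^ (p - 2) * (y - r)) := by
  have hderiv (r : ℝ) : HasDerivAt
      (fun r => |y + r| ^ (p - 2) * (y + r) - |y - r| ^ (p - 2) * (y - r))
      ((p - 1) * (|y + r| ^ (p - 2) + |y - r| ^ (p - 2))) r := by
    have hadd := (hasDerivAt_abs_rpow_mul_self (q := p - 2) (by linarith) (y + r)).comp r
      ((hasDerivAt_id r).const_add y)
    have hsub := (hasDerivAt_abs_rpow_mul_self (q := p - 2) (by linarith) (y - r)).comp r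
      ((hasDerivAt_id r).const_sub y)
    convert! hadd.sub hsub using 1
    ring
  have hconvex : ConvexOn ℝ Set.univ fun r : ℝ => |y + r| ^ (p - 2) + |y - r| ^ (p - 2) := by
    have habs := convexOn_abs_rpow (q := p - 2) (by linarith)
    have hsub : ConvexOn ℝ Set.univ fun r : ℝ => |y - r| ^ (p - 2) := by
      simpa only [Function.comp_def, neg_add_eq_sub, abs_sub_comm _ y, Set.preimage_univ] using
        habs.translate_right (-y)
    exact (habs.translate_right y).add hsub
  have hmono : MonotoneOn (fun r : ℝ => |y + r| ^ (p - 2) + |y - r| ^ (p - 2)) (Set.Ici 0) :=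
    monotoneOn_of_convexOn_of_even hconvex fun r => by
      rw [← sub_eq_add_neg, sub_neg_eq_add, add_comm]
  refine MonotoneOn.convexOn_of_deriv (convex_Ici 0)
    (fun r _ => (hderiv r).continuousAt.continuousWithinAt)
    (fun r _ => (hderiv r).differentiableAt.differentiableWithinAt) ?_
  rw [funext fun r => (hderiv r).deriv]
  exact fun r hr t ht hrt => mul_le_mul_of_nonneg_left
    (hmono (interior_subset hr) (interior_subset ht) hrt) (by linarith)

theorem convexOn_abs_add_sqrt_rpow (hp : 3 ≤ p) (y : ℝ) :
    ConvexOn ℝ (Set.Ici 0) (fun u => |y + √u| ^ p + |y - √u| ^ p) := by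
  have hderiv (u : ℝ) (hu : 0 < u) : HasDerivAt (fun u => |y + √u| ^ p + |y - √u| ^ p)
      (p / 2 * ((|y + √u| ^ (p - 2) * (y + √u) - |y - √u| ^ (p - 2) * (y - √u)) / √u)) u := by
    have hsqrt := hasDerivAt_sqrt hu.ne'
    have hadd := (hasDerivAt_abs_rpow (y + √u) (by linarith : 1 < p)).comp u (hsqrt.const_add y)
    have hsub := (hasDerivAt_abs_rpow (y - √u) (by linarith : 1 < p)).comp u (hsqrt.const_sub y)
    convert! hadd.add hsub using 1
    have : 0 < √u := sqrt_pos.2 hu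
    field_simp
    ring
  have hcont : Continuous (fun u => |y + √u| ^ p + |y - √u| ^ p) :=
    .add (.rpow_const (by fun_prop) fun _ => .inr (by linarith))
      (.rpow_const (by fun_prop) fun _ => .inr (by linarith))
  refine MonotoneOn.convexOn_of_deriv (convex_Ici 0) hcont.continuousOn
    (fun u hu => (hderiv u (by simpa using hu)).differentiableAt.differentiableWithinAt) ?_
  rw [interior_Ici]
  intro u (hu : 0 < u) w (hw : 0 < w) huw
  rw [(hderiv u hu).deriv, (hderiv w hw).deriv]
  have hsecant := (convexOn_abs_rpow_mul_self_sub hp y).secant_mono (a := 0)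
    Set.self_mem_Ici (sqrt_nonneg u) (sqrt_nonneg w) (sqrt_pos.2 hu).ne' (sqrt_pos.2 hw).ne'
    (sqrt_le_sqrt huw)
  simp only [add_zero, sub_zero, sub_self] at hsecant
  gcongr

theorem abs_rpow_sign_mean_le_integral_gaussianReal (hp : 3 ≤ p) (y a : ℝ) :
    (|y + a| ^ p + |y - a| ^ p) / 2 ≤ ∫ h, |y + h| ^ p ∂gaussianReal 0 (‖a‖₊ ^ 2) := by
  set γ := gaussianReal 0 (‖a‖₊ ^ 2)
  have hint_add : Integrable (fun h => |y + h| ^ p) γ :=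
    integrable_abs_add_rpow_gaussianReal (by linarith) y _
  have hneg : MeasurePreserving (fun x : ℝ => -x) γ γ :=
    ⟨measurable_neg, by rw [gaussianReal_map_neg, neg_zero]⟩
  have hint_sub : Integrable (fun h => |y - h| ^ p) γ := by
    simpa only [Function.comp_def, sub_eq_add_neg] using
      hneg.integrable_comp_of_integrable hint_add
  have hsymm : ∫ h, |y - h| ^ p ∂γ = ∫ h, |y + h| ^ p ∂γ := by
    simpa only [sub_eq_add_neg] using
      hneg.integral_comp (MeasurableEquiv.neg ℝ).measurableEmbedding fun h => |y + h| ^ p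
  have hsqrt (h : ℝ) : |y + √(h ^ 2)| ^ p + |y - √(h ^ 2)| ^ p = |y + h| ^ p + |y - h| ^ p := by
    rw [sqrt_sq_eq_abs]
    rcases abs_choice h with habs | habs <;> rw [habs]
    rw [sub_neg_eq_add, ← sub_eq_add_neg, add_comm]
  have hcont : Continuous (fun u => |y + √u| ^ p + |y - √u| ^ p) :=
    .add (.rpow_const (by fun_prop) fun _ => .inr (by linarith))
      (.rpow_const (by fun_prop) fun _ => .inr (by linarith))
  have hjensen := (convexOn_abs_add_sqrt_rpow hp y).map_integral_le (μ := γ)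
    (f := fun h => h ^ 2) hcont.continuousOn isClosed_Ici (.of_forall sq_nonneg)
    (memLp_id_gaussianReal' 2 (by simp)).integrable_sq
    ((hint_add.add hint_sub).congr (.of_forall fun h => (hsqrt h).symm))
  have hvar : ∫ h, h ^ 2 ∂γ = a ^ 2 := by
    rw [integral_sq_gaussianReal, NNReal.coe_pow, coe_nnnorm, norm_eq_abs, sq_abs]
  simp only [hvar, hsqrt] at hjensen
  rw [integral_add hint_add hint_sub, hsymm] at hjensen
  linarith

theorem rademacherMean_abs_rpow_le_of_three_le {ι : Type*} [Fintype ι] [DecidableEq ι] (hp : 3 ≤ p)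
    (s : Finset ι) (a : ι → ℝ) :
    rademacherMean s a (fun x => |x| ^ p) ≤ gaussianAbsMoment p * (∑ i ∈ s, a i ^ 2) ^ (p / 2) := by
  have h := rademacherMean_le_integral_gaussianReal (φ := fun x => |x| ^ p)
    (integrable_abs_add_rpow_gaussianReal (by linarith))
    (abs_rpow_sign_mean_le_integral_gaussianReal hp) s a 0
  simpa [integral_abs_rpow_gaussianReal (p := p) (by linarith)] using h

end LargeExponent

section LargeFourthMoment

theorem eulerMascheroniConstant_lt : eulerMascheroniConstant < 0.5855 := by
  have hharmonic : ((harmonic 64 : ℚ) : ℝ) ≤ 4.744 := by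
    have h : harmonic 64 ≤ 4.744 := by
      simp only [harmonic, sum_range_succ, sum_range_zero]
      norm_num
    exact (Rat.cast_le.2 h).trans (by norm_num)
  have hlog : log ((64 : ℕ) : ℝ) = 6 * log 2 := by
    rw [show ((64 : ℕ) : ℝ) = 2 ^ 6 by norm_num, log_pow]
    norm_num
  calc eulerMascheroniConstant < eulerMascheroniSeq' 64 :=
        eulerMascheroniConstant_lt_eulerMascheroniSeq' 64
    _ = harmonic 64 - 6 * log 2 := by rw [eulerMascheroniSeq', if_neg (by norm_num), hlog]
    _ < 0.5855 := by linarith [log_two_gt_d9]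

theorem Gamma_three_halves : Gamma (3 / 2) = √π / 2 := by
  rw [show (3 / 2 : ℝ) = 1 / 2 + 1 by norm_num, Gamma_add_one (by norm_num), Gamma_one_half_eq]
  ring

theorem hasDerivAt_Gamma_three_halves :
    HasDerivAt Gamma (√π * (1 - eulerMascheroniConstant / 2 - log 2)) (3 / 2) := by
  have hmul : HasDerivAt (fun s => (s - 1) * Gamma (s - 1))
      (√π * (1 - eulerMascheroniConstant / 2 - log 2)) (3 / 2) := by
    have hsub : HasDerivAt (fun s : ℝ => s - 1) 1 (3 / 2) := (hasDerivAt_id _).sub_const 1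
    have hGamma := HasDerivAt.comp (h₂ := Gamma) (3 / 2 : ℝ)
      (by convert! hasDerivAt_Gamma_one_half using 1; norm_num) hsub
    convert! hsub.mul hGamma using 1
    rw [Function.comp, show (3 / 2 - 1 : ℝ) = 1 / 2 by norm_num, Gamma_one_half_eq]
    ring
  refine hmul.congr_of_eventuallyEq ?_
  filter_upwards [lt_mem_nhds (show (1 : ℝ) < 3 / 2 by norm_num)] with s hs
  rw [← Gamma_add_one (sub_pos.2 hs).ne', sub_add_cancel]

theorem le_Gamma_three_halves_add {q : ℝ} (hq : 0 < q) :
    √π / 2 * (1 + 0.018 * q) ≤ Gamma (3 / 2 + q) := by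
  have hslope := convexOn_Gamma.le_slope_of_hasDerivAt (Set.mem_Ioi.2 (by norm_num))
    (Set.mem_Ioi.2 (by linarith)) (lt_add_of_pos_right _ hq) hasDerivAt_Gamma_three_halves
  rw [slope_def_field, le_div_iff₀ (by linarith), add_sub_cancel_left, Gamma_three_halves]
    at hslope
  have hconst : √π * 0.009 * q ≤ √π * (1 - eulerMascheroniConstant / 2 - log 2) * q := by
    gcongr
    linarith [eulerMascheroniConstant_lt, log_two_lt_d9]
  linarith

-- Bernoulli's inequality for `(x ^ 2 / c) ^ q`, i.e. the tangent to `u ↦ u ^ q` at `u = c`.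
theorem abs_rpow_two_mul_add_two_le {q c : ℝ} (hq0 : 0 < q) (hq1 : q ≤ 1) (hc : 0 < c) (x : ℝ) :
    |x| ^ (2 * q + 2) ≤ c ^ q * ((1 - q) * x ^ 2 + q / c * x ^ 4) := by
  have hsplit : |x| ^ (2 * q + 2) = (x ^ 2) ^ q * x ^ 2 := by
    rw [rpow_add_of_nonneg (abs_nonneg x) (by linarith) two_pos.le, rpow_mul (abs_nonneg x),
      rpow_two, sq_abs]
  have hquot : 0 ≤ x ^ 2 / c := by positivity
  have hbernoulli := rpow_one_add_le_one_add_mul_self (s := x ^ 2 / c - 1) (by linarith) hq0.le hq1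
  rw [add_sub_cancel, div_rpow (sq_nonneg x) hc.le, div_le_iff₀ (by positivity)] at hbernoulli
  calc |x| ^ (2 * q + 2) ≤ (1 + q * (x ^ 2 / c - 1)) * c ^ q * x ^ 2 := by rw [hsplit]; gcongr
    _ = c ^ q * ((1 - q) * x ^ 2 + q / c * x ^ 4) := by ring

-- `2.036 = 2 * 1.018` is just above `3 - 2 * (25 / 36) ^ 2`, the bound on the fourth moment below.
theorem rpow_le_gaussianAbsMoment {q : ℝ} (hq0 : 0 < q) (hq1 : q ≤ 1) :
    2.036 ^ q ≤ gaussianAbsMoment (2 * q + 2) := by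
  have hpi : 0 < √π := sqrt_pos.2 pi_pos
  calc (2.036 : ℝ) ^ q = 2 ^ q * (1 + 0.018) ^ q := by
        rw [← mul_rpow (by norm_num) (by norm_num)]
        norm_num
    _ ≤ 2 ^ q * (1 + q * 0.018) := by
        gcongr
        exact rpow_one_add_le_one_add_mul_self (by norm_num) hq0.le hq1
    _ ≤ 2 ^ q * (2 * (Gamma (3 / 2 + q) / √π)) := by
        gcongr
        rw [mul_div_assoc', le_div_iff₀ hpi]
        linarith [le_Gamma_three_halves_add hq0]
    _ = gaussianAbsMoment (2 * q + 2) := by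
        rw [gaussianAbsMoment_eq (by linarith), show (2 * q + 2) / 2 = q + 1 by ring,
          show (2 * q + 2 + 1) / 2 = 3 / 2 + q by ring, rpow_add_one two_ne_zero, mul_assoc]

theorem rademacherMean_abs_rpow_le_of_le_sum_pow_four {ι : Type*} [Fintype ι] [DecidableEq ι]
    {p : ℝ} (hp2 : 2 < p) (hp4 : p ≤ 4) {s : Finset ι} {a : ι → ℝ}
    (hsq : ∑ i ∈ s, a i ^ 2 = 1) (hfour : (25 / 36 : ℝ) ^ 2 ≤ ∑ i ∈ s, a i ^ 4) :
    rademacherMean s a (fun x => |x| ^ p) ≤ gaussianAbsMoment p := by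
  obtain ⟨q, rfl⟩ : ∃ q, p = 2 * q + 2 := ⟨(p - 2) / 2, by ring⟩
  have hq0 : 0 < q := by linarith
  have hq1 : q ≤ 1 := by linarith
  have hmoment : rademacherMean s a (fun x => x ^ 4) ≤ 2.036 := by
    rw [rademacherMean_pow_four, hsq]
    norm_num at hfour ⊢
    linarith
  calc rademacherMean s a (fun x => |x| ^ (2 * q + 2))
      ≤ rademacherMean s a
          (fun x => (2.036 : ℝ) ^ q * ((1 - q) * x ^ 2 + q / 2.036 * x ^ 4)) :=
        rademacherMean_mono s a (abs_rpow_two_mul_add_two_le hq0 hq1 (by norm_num))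
    _ = 2.036 ^ q * ((1 - q) + q / 2.036 * rademacherMean s a (fun x => x ^ 4)) := by
        rw [rademacherMean_const_mul, rademacherMean_add, rademacherMean_const_mul,
          rademacherMean_const_mul, rademacherMean_sq, hsq, mul_one]
    _ ≤ 2.036 ^ q * ((1 - q) + q / 2.036 * 2.036) := by gcongr
    _ = 2.036 ^ q := by ring
    _ ≤ gaussianAbsMoment (2 * q + 2) := rpow_le_gaussianAbsMoment hq0 hq1

end LargeFourthMoment

section AlternatingTaylor

theorem nonneg_of_hasDerivAt_nonneg {F F' : ℝ → ℝ} (hF : ∀ x, HasDerivAt F (F' x) x)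
    (h0 : 0 ≤ F 0) (hF' : ∀ x, 0 ≤ x → 0 ≤ F' x) {x : ℝ} (hx : 0 ≤ x) : 0 ≤ F x := by
  have hmono : MonotoneOn F (Set.Ici 0) :=
    monotoneOn_of_hasDerivWithinAt_nonneg (convex_Ici 0)
      (fun y _ => (hF y).continuousAt.continuousWithinAt) (fun y _ => (hF y).hasDerivWithinAt)
      (fun y hy => hF' y (interior_subset hy))
  exact h0.trans (hmono Set.self_mem_Ici hx hx)

/-- The sum of the first `n` terms of the Taylor series of `cos` at `0`. -/
noncomputable def cosTaylor (n : ℕ) (x : ℝ) : ℝ :=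
  ∑ k ∈ range n, (-1) ^ k * (x ^ (2 * k) / (2 * k).factorial)

/-- The sum of the first `n` terms of the Taylor series of `sin` at `0`. -/
noncomputable def sinTaylor (n : ℕ) (x : ℝ) : ℝ :=
  ∑ k ∈ range n, (-1) ^ k * (x ^ (2 * k + 1) / (2 * k + 1).factorial)

theorem hasDerivAt_pow_succ_div_factorial (m : ℕ) (x : ℝ) :
    HasDerivAt (fun x : ℝ => x ^ (m + 1) / (m + 1).factorial) (x ^ m / m.factorial) x := by
  convert! (hasDerivAt_pow (m + 1) x).div_const ((m + 1).factorial : ℝ) using 1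
  rw [Nat.factorial_succ, Nat.add_sub_cancel]
  push_cast
  field_simp

theorem hasDerivAt_sinTaylor (n : ℕ) (x : ℝ) : HasDerivAt (sinTaylor n) (cosTaylor n x) x :=
  HasDerivAt.fun_sum fun k _ => (hasDerivAt_pow_succ_div_factorial (2 * k) x).const_mul _

theorem hasDerivAt_cosTaylor_succ (n : ℕ) (x : ℝ) :
    HasDerivAt (cosTaylor (n + 1)) (-sinTaylor n x) x := by
  have hsplit : cosTaylor (n + 1) = fun x =>
      (∑ k ∈ range n, -(-1 : ℝ) ^ k * (x ^ (2 * k + 1 + 1) / (2 * k + 1 + 1).factorial)) + 1 := by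
    funext x
    simp [cosTaylor, sum_range_succ', pow_succ, mul_add]
  have hderiv : -sinTaylor n x =
      ∑ k ∈ range n, -(-1 : ℝ) ^ k * (x ^ (2 * k + 1) / (2 * k + 1).factorial) := by
    simp only [sinTaylor, neg_mul, sum_neg_distrib]
  rw [hsplit, hderiv]
  exact (HasDerivAt.fun_sum fun k _ =>
    (hasDerivAt_pow_succ_div_factorial (2 * k + 1) x).const_mul _).add_const 1

theorem cosTaylor_sinTaylor_alternating (n : ℕ) {x : ℝ} (hx : 0 ≤ x) :
    0 ≤ (-1) ^ (n + 1) * (cos x - cosTaylor (n + 1) x) ∧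
      0 ≤ (-1) ^ (n + 1) * (sin x - sinTaylor (n + 1) x) := by
  have hsin (n : ℕ) (hcos : ∀ y, 0 ≤ y → 0 ≤ (-1) ^ (n + 1) * (cos y - cosTaylor (n + 1) y)) :
      ∀ y, 0 ≤ y → 0 ≤ (-1) ^ (n + 1) * (sin y - sinTaylor (n + 1) y) := fun y hy =>
    nonneg_of_hasDerivAt_nonneg
      (fun z => ((hasDerivAt_sin z).sub (hasDerivAt_sinTaylor _ z)).const_mul _)
      (by simp [sinTaylor]) hcos hy
  suffices hcos : ∀ y, 0 ≤ y → 0 ≤ (-1) ^ (n + 1) * (cos y - cosTaylor (n + 1) y) from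
    ⟨hcos x hx, hsin n hcos x hx⟩
  induction n with
  | zero => exact fun y _ => by simp [cosTaylor, cos_le_one]
  | succ n ih =>
    refine fun y hy => nonneg_of_hasDerivAt_nonneg
      (fun z => ((hasDerivAt_cos z).sub (hasDerivAt_cosTaylor_succ _ z)).const_mul _)
      (by simp [cosTaylor, sum_range_succ']) (fun z hz => ?_) hy
    convert! hsin n ih z hz using 1
    ring

theorem taylor_seven_le_sin {x : ℝ} (hx : 0 ≤ x) :
    x - x ^ 3 / 6 + x ^ 5 / 120 - x ^ 7 / 5040 ≤ sin x := by
  have h := (cosTaylor_sinTaylor_alternating 3 hx).2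
  norm_num [sinTaylor, sum_range_succ, Nat.factorial] at h
  linarith

theorem cos_le_taylor_eight {x : ℝ} (hx : 0 ≤ x) :
    cos x ≤ 1 - x ^ 2 / 2 + x ^ 4 / 24 - x ^ 6 / 720 + x ^ 8 / 40320 := by
  have h := (cosTaylor_sinTaylor_alternating 4 hx).1
  norm_num [cosTaylor, sum_range_succ, Nat.factorial] at h
  linarith

end AlternatingTaylor

section ComparisonMap

/-- A polynomial lower bound for `-a ^ 2 / (2 * log (cos a)) = 1 - a ^ 2 / 6 - a ^ 4 / 60 - ⋯` on
`[0, π / 2]`: the Taylor coefficients are exact up to order four, the last one leaves some room. -/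
noncomputable def comparisonDenom (a : ℝ) : ℝ := 1 - a ^ 2 / 6 - a ^ 4 / 60 - 3 / 1000 * a ^ 6

/-- The polynomial `comparisonDenom a - a / 2 * comparisonDenom' a`, which is the numerator of the
derivatives of `comparisonMap a` and of `comparisonMap a ^ 2 / 2`. -/
noncomputable def comparisonWeight (a : ℝ) : ℝ := 1 + a ^ 4 / 60 + 6 / 1000 * a ^ 6

/-- The substitution `u = a / √(comparisonDenom a)`, under which `exp (-u ^ 2 / 2)` dominates
`cos a` for `0 ≤ a ≤ π / 2`. -/
noncomputable def comparisonMap (a : ℝ) : ℝ := a / √(comparisonDenom a)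

theorem hasDerivAt_comparisonDenom (a : ℝ) :
    HasDerivAt comparisonDenom (-(a / 3) - a ^ 3 / 15 - 18 / 1000 * a ^ 5) a := by
  have h := ((((hasDerivAt_pow 2 a).div_const 6).const_sub 1).sub
    ((hasDerivAt_pow 4 a).div_const 60)).sub ((hasDerivAt_pow 6 a).const_mul (3 / 1000))
  convert! h using 1
  norm_num
  ring

theorem continuous_comparisonDenom : Continuous comparisonDenom :=
  continuous_iff_continuousAt.2 fun a => (hasDerivAt_comparisonDenom a).continuousAt

theorem continuous_comparisonWeight : Continuous comparisonWeight := by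
  unfold comparisonWeight
  fun_prop

theorem comparisonDenom_le (a : ℝ) : comparisonDenom a ≤ 1 - a ^ 2 / 6 := by
  have : 0 ≤ a ^ 4 / 60 + 3 / 1000 * a ^ 6 := by positivity
  rw [comparisonDenom]
  linarith

theorem comparisonWeight_pos (a : ℝ) : 0 < comparisonWeight a := by
  unfold comparisonWeight
  positivity

variable {a : ℝ}

theorem comparisonDenom_ge (ha0 : 0 ≤ a) (ha : a ≤ π / 2) : 1 / 4 ≤ comparisonDenom a := by
  have hle : a ≤ 1.575 := by linarith [pi_lt_d2]
  have h2 : a ^ 2 ≤ 1.575 ^ 2 := by gcongr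
  have h4 : a ^ 4 ≤ 1.575 ^ 4 := by gcongr
  have h6 : a ^ 6 ≤ 1.575 ^ 6 := by gcongr
  rw [comparisonDenom]
  linarith

theorem comparisonDenom_pos (ha0 : 0 ≤ a) (ha : a ≤ π / 2) : 0 < comparisonDenom a := by
  linarith [comparisonDenom_ge ha0 ha]

theorem taylor_mul_comparisonWeight_le (ha0 : 0 ≤ a) (ha : a ≤ π / 2) :
    a * (1 - a ^ 2 / 2 + a ^ 4 / 24 - a ^ 6 / 720 + a ^ 8 / 40320) * comparisonWeight a ≤
      (a - a ^ 3 / 6 + a ^ 5 / 120 - a ^ 7 / 5040) * comparisonDenom a ^ 2 := by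
  have hsq : a ^ 2 ≤ 5 / 2 := by nlinarith [pi_lt_d2]
  have hquot : 0 ≤ (29 / 23625 : ℝ) + 2209 / 604800 * a ^ 2 - 3883 / 11340000 * (a ^ 2) ^ 2
      + 49849 / 4536000000 * (a ^ 2) ^ 3 - 4849 / 4536000000 * (a ^ 2) ^ 4
      + 139 / 2520000000 * (a ^ 2) ^ 5 - 1 / 560000000 * (a ^ 2) ^ 6 := by
    have hpow (k : ℕ) : (a ^ 2) ^ (k + 1) ≤ (a ^ 2) ^ k * (5 / 2) := by
      rw [pow_succ]
      gcongr
    linarith [hpow 1, hpow 3, hpow 5, sq_nonneg a, pow_nonneg (sq_nonneg a) 3,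
      pow_nonneg (sq_nonneg a) 5]
  rw [← sub_nonneg]
  convert! mul_nonneg (pow_nonneg ha0 7) hquot using 1
  rw [comparisonDenom, comparisonWeight]
  ring

theorem mul_cos_mul_comparisonWeight_le (ha0 : 0 ≤ a) (ha : a ≤ π / 2) :
    a * cos a * comparisonWeight a ≤ sin a * comparisonDenom a ^ 2 :=
  calc a * cos a * comparisonWeight a
      ≤ a * (1 - a ^ 2 / 2 + a ^ 4 / 24 - a ^ 6 / 720 + a ^ 8 / 40320) * comparisonWeight a := by
        have := (comparisonWeight_pos a).le
        gcongr
        exact cos_le_taylor_eight ha0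
    _ ≤ (a - a ^ 3 / 6 + a ^ 5 / 120 - a ^ 7 / 5040) * comparisonDenom a ^ 2 :=
        taylor_mul_comparisonWeight_le ha0 ha
    _ ≤ sin a * comparisonDenom a ^ 2 := by
        gcongr
        exact taylor_seven_le_sin ha0

theorem comparisonMap_sq (ha0 : 0 ≤ a) (ha : a ≤ π / 2) :
    comparisonMap a ^ 2 = a ^ 2 / comparisonDenom a := by
  rw [comparisonMap, div_pow, sq_sqrt (comparisonDenom_pos ha0 ha).le]

theorem hasDerivAt_comparisonMap (ha0 : 0 ≤ a) (ha : a ≤ π / 2) :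
    HasDerivAt comparisonMap (comparisonWeight a / √(comparisonDenom a) ^ 3) a := by
  have hpos := comparisonDenom_pos ha0 ha
  have hsqrt : 0 < √(comparisonDenom a) := sqrt_pos.2 hpos
  have h := (hasDerivAt_id a).div ((hasDerivAt_comparisonDenom a).sqrt hpos.ne') hsqrt.ne'
  convert! h using 1
  have hsq : √(comparisonDenom a) ^ 2 = comparisonDenom a := sq_sqrt hpos.le
  rw [id]
  field_simp
  rw [hsq, comparisonDenom, comparisonWeight]
  ring

theorem le_comparisonMap (ha0 : 0 ≤ a) (ha : a ≤ π / 2) : a ≤ comparisonMap a := by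
  have hsqrt : √(comparisonDenom a) ≤ 1 :=
    sqrt_le_one.2 (by linarith [comparisonDenom_le a, sq_nonneg a])
  exact le_div_self ha0 (sqrt_pos.2 (comparisonDenom_pos ha0 ha)) hsqrt

theorem comparisonMap_pi_div_two_le : comparisonMap (π / 2) ≤ π := by
  have hsqrt : 1 / 2 ≤ √(comparisonDenom (π / 2)) :=
    le_sqrt_of_sq_le (by linarith [comparisonDenom_ge (by positivity) (le_refl (π / 2))])
  rw [comparisonMap, div_le_iff₀ (by linarith)]
  nlinarith [pi_pos]

theorem cos_le_exp_comparisonMap (ha0 : 0 ≤ a) (ha : a ≤ π / 2) :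
    cos a ≤ exp (-(comparisonMap a ^ 2) / 2) := by
  rcases ha.eq_or_lt with rfl | hlt
  · rw [cos_pi_div_two]
    exact (exp_pos _).le
  have hcos {x : ℝ} (hx : x ∈ Set.Ico 0 (π / 2)) : 0 < cos x :=
    cos_pos_of_mem_Ioo ⟨by linarith [hx.1, pi_pos], hx.2⟩
  have hderiv (x : ℝ) (hx : x ∈ Set.Ico 0 (π / 2)) :
      HasDerivAt (fun x => -log (cos x) - x ^ 2 / comparisonDenom x / 2)
        (sin x / cos x - x * comparisonWeight x / comparisonDenom x ^ 2) x := by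
    have hden := (comparisonDenom_pos hx.1 hx.2.le).ne'
    have h := ((hasDerivAt_cos x).log (hcos hx).ne').neg.sub
      (((hasDerivAt_pow 2 x).div (hasDerivAt_comparisonDenom x) hden).div_const 2)
    convert! h using 1
    field_simp
    rw [comparisonDenom, comparisonWeight]
    push_cast
    ring
  have hmono : MonotoneOn (fun x => -log (cos x) - x ^ 2 / comparisonDenom x / 2)
      (Set.Ico 0 (π / 2)) := by
    refine monotoneOn_of_hasDerivWithinAt_nonneg (convex_Ico _ _)
      (fun x hx => (hderiv x hx).continuousAt.continuousWithinAt)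
      (fun x hx => (hderiv x (interior_subset hx)).hasDerivWithinAt) fun x hx => ?_
    replace hx := interior_subset hx
    have hden := comparisonDenom_pos hx.1 hx.2.le
    rw [sub_nonneg, div_le_div_iff₀ (by positivity) (hcos hx)]
    linarith [mul_cos_mul_comparisonWeight_le hx.1 hx.2.le]
  have hzero := hmono ⟨le_rfl, by positivity⟩ ⟨ha0, hlt⟩ ha0
  simp only [cos_zero, log_one, neg_zero, ne_eq, OfNat.ofNat_ne_zero, not_false_eq_true, zero_pow,
    zero_div, sub_zero] at hzero
  rw [← log_le_iff_le_exp (hcos ⟨ha0, hlt⟩), comparisonMap_sq ha0 ha]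
  linarith

end ComparisonMap

section GaussKernel

theorem intervalIntegrable_of_continuousOn_Ioi {f : ℝ → ℝ} (hf : ContinuousOn f (Set.Ioi 0))
    {x y : ℝ} (hx : 0 < x) (hy : 0 < y) : IntervalIntegrable f volume x y :=
  (hf.mono fun _ hz => (lt_min hx hy).trans_le hz.1).intervalIntegrable

/-- The integrand `exp (-s * u ^ 2 / 2) / u ^ 3`, the Gaussian counterpart of `cosKernel`. -/
noncomputable def gaussKernel (s u : ℝ) : ℝ := exp (-(u ^ 2) / 2 * s) / u ^ 3

theorem continuousOn_gaussKernel (s : ℝ) : ContinuousOn (gaussKernel s) (Set.Ioi 0) :=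
  ContinuousOn.div (by fun_prop) (by fun_prop) fun _ hu => pow_ne_zero _ (ne_of_gt hu)

theorem gaussKernel_nonneg (s : ℝ) {u : ℝ} (hu : 0 ≤ u) : 0 ≤ gaussKernel s u := by
  unfold gaussKernel
  positivity

theorem integral_inv_pow_three {x y : ℝ} (hx : 0 < x) (hy : 0 < y) :
    ∫ u in x..y, 1 / u ^ 3 = (1 / x ^ 2 - 1 / y ^ 2) / 2 := by
  have h0 : (0 : ℝ) ∉ Set.uIcc x y := fun h => (lt_min hx hy).not_ge h.1
  have h := integral_zpow (n := -3) (.inr ⟨by norm_num, h0⟩)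
  norm_num [zpow_neg] at h
  simp only [one_div]
  rw [h]
  ring

variable {s ε : ℝ}

theorem exp_div_twelve_le_integral_gaussKernel (hs : 0 ≤ s) (hε0 : 0 < ε)
    (hε : ε ≤ π / 2) :
    exp (-(comparisonMap ε ^ 2) / 2 * s) / 12 ≤ ∫ u in ε..comparisonMap ε, gaussKernel s u := by
  set E := exp (-(comparisonMap ε ^ 2) / 2 * s)
  have hle := le_comparisonMap hε0.le hε
  have hmap0 := hε0.trans_le hle
  have := comparisonDenom_pos hε0.le hε
  have hcont : ContinuousOn (fun u : ℝ => E * (1 / u ^ 3)) (Set.Ioi 0) :=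
    continuousOn_const.mul <| .div continuousOn_const (by fun_prop)
      fun _ hu => pow_ne_zero _ (ne_of_gt hu)
  have hsixth : 1 / 6 ≤ 1 / ε ^ 2 - 1 / comparisonMap ε ^ 2 := by
    rw [comparisonMap_sq hε0.le hε, one_div_div, ← sub_div, le_div_iff₀ (by positivity)]
    linarith [comparisonDenom_le ε]
  calc E / 12 = E * (1 / 6 / 2) := by ring
    _ ≤ E * ((1 / ε ^ 2 - 1 / comparisonMap ε ^ 2) / 2) := by gcongr
    _ = ∫ u in ε..comparisonMap ε, E * (1 / u ^ 3) := by
        rw [intervalIntegral.integral_const_mul, integral_inv_pow_three hε0 hmap0]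
    _ ≤ ∫ u in ε..comparisonMap ε, gaussKernel s u := by
        refine intervalIntegral.integral_mono_on hle
          (intervalIntegrable_of_continuousOn_Ioi hcont hε0 hmap0)
          (intervalIntegrable_of_continuousOn_Ioi (continuousOn_gaussKernel s) hε0 hmap0)
          fun u hu => ?_
        have hu0 : 0 < u := hε0.trans_le hu.1
        have hule := hu.2
        rw [mul_one_div, gaussKernel]
        simp only [E]
        gcongr

theorem cos_rpow_mul_comparisonWeight_le (hs : 0 ≤ s) {a : ℝ} (ha0 : 0 < a) (ha : a ≤ π / 2) :
    cos a ^ s * (comparisonWeight a / a ^ 3) ≤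
      gaussKernel s (comparisonMap a) * (comparisonWeight a / √(comparisonDenom a) ^ 3) := by
  have hsqrt : 0 < √(comparisonDenom a) := sqrt_pos.2 (comparisonDenom_pos ha0.le ha)
  have hweight := (comparisonWeight_pos a).le
  have hcos := rpow_le_rpow (cos_nonneg_of_mem_Icc ⟨by linarith, ha⟩)
    (cos_le_exp_comparisonMap ha0.le ha) hs
  calc cos a ^ s * (comparisonWeight a / a ^ 3)
      ≤ exp (-(comparisonMap a ^ 2) / 2) ^ s * (comparisonWeight a / a ^ 3) := by gcongr
    _ = gaussKernel s (comparisonMap a) * (comparisonWeight a / √(comparisonDenom a) ^ 3) := by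
        rw [← exp_mul, gaussKernel]
        nth_rw 3 [comparisonMap]
        field_simp

theorem integral_cos_rpow_mul_comparisonWeight_le (hs : 0 ≤ s) (hε0 : 0 < ε) (hε : ε ≤ π / 2) :
    ∫ a in ε..π / 2, cos a ^ s * (comparisonWeight a / a ^ 3) ≤
      ∫ u in comparisonMap ε..comparisonMap (π / 2), gaussKernel s u := by
  have hmem {x : ℝ} (hx : x ∈ Set.uIcc ε (π / 2)) : 0 < x ∧ x ≤ π / 2 := by
    rw [Set.uIcc_of_le hε] at hx
    exact ⟨hε0.trans_le hx.1, hx.2⟩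
  have hderiv (x : ℝ) (hx : x ∈ Set.uIcc ε (π / 2)) :=
    hasDerivAt_comparisonMap (hmem hx).1.le (hmem hx).2
  have hderiv_cont : ContinuousOn (fun x => comparisonWeight x / √(comparisonDenom x) ^ 3)
      (Set.uIcc ε (π / 2)) :=
    continuous_comparisonWeight.continuousOn.div
      (continuous_comparisonDenom.sqrt.pow 3).continuousOn
      fun x hx => pow_ne_zero _ (sqrt_pos.2 (comparisonDenom_pos (hmem hx).1.le (hmem hx).2)).ne'
  have hmaps : Set.MapsTo comparisonMap (Set.uIcc ε (π / 2)) (Set.Ioi 0) := fun x hx =>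
    (hmem hx).1.trans_le (le_comparisonMap (hmem hx).1.le (hmem hx).2)
  rw [← intervalIntegral.integral_comp_mul_deriv' hderiv hderiv_cont
    ((continuousOn_gaussKernel s).mono hmaps.image_subset)]
  refine intervalIntegral.integral_mono_on hε (ContinuousOn.intervalIntegrable ?_)
    (ContinuousOn.intervalIntegrable ?_) fun x hx => ?_
  · exact (continuous_cos.rpow_const fun _ => .inr hs).continuousOn.mul <|
      continuous_comparisonWeight.continuousOn.div (by fun_prop)
        fun x hx => pow_ne_zero _ (hmem hx).1.ne'
  · exact ((continuousOn_gaussKernel s).comp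
      (fun x hx => (hderiv x hx).continuousAt.continuousWithinAt) hmaps).mul hderiv_cont
  · exact cos_rpow_mul_comparisonWeight_le hs (hε0.trans_le hx.1) hx.2

theorem integral_cos_rpow_add_exp_le_integral_gaussKernel (hs : 0 ≤ s) (hε0 : 0 < ε)
    (hε : ε ≤ π / 2) :
    (∫ a in ε..π / 2, cos a ^ s * (comparisonWeight a / a ^ 3)) +
      exp (-(comparisonMap ε ^ 2) / 2 * s) / 12 ≤ ∫ u in ε..π, gaussKernel s u := by
  have hint {x y : ℝ} (hx : 0 < x) (hy : 0 < y) :=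
    intervalIntegrable_of_continuousOn_Ioi (continuousOn_gaussKernel s) hx hy
  have hstart : 0 < comparisonMap ε := hε0.trans_le (le_comparisonMap hε0.le hε)
  have hend : 0 < comparisonMap (π / 2) :=
    pi_div_two_pos.trans_le (le_comparisonMap pi_div_two_pos.le le_rfl)
  have hrest : 0 ≤ ∫ u in comparisonMap (π / 2)..π, gaussKernel s u :=
    intervalIntegral.integral_nonneg comparisonMap_pi_div_two_le fun u hu =>
      gaussKernel_nonneg s (hend.le.trans hu.1)
  rw [← intervalIntegral.integral_add_adjacent_intervals (hint hε0 hstart) (hint hstart pi_pos),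
    ← intervalIntegral.integral_add_adjacent_intervals (hint hstart hend) (hint hend pi_pos)]
  linarith [exp_div_twelve_le_integral_gaussKernel hs hε0 hε,
    integral_cos_rpow_mul_comparisonWeight_le hs hε0 hε]

end GaussKernel

section CosKernelTail

open Filter Topology

/-- The integrand `|cos u| ^ s / u ^ 3`, to be compared with `gaussKernel s`. -/
noncomputable def cosKernel (s u : ℝ) : ℝ := |cos u| ^ s / u ^ 3

theorem cosKernel_nonneg (s : ℝ) {u : ℝ} (hu : 0 ≤ u) : 0 ≤ cosKernel s u := by
  unfold cosKernel
  positivity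

theorem measurable_cosKernel (s : ℝ) : Measurable (cosKernel s) := by
  unfold cosKernel
  fun_prop

theorem continuousOn_cosKernel {s : ℝ} (hs : 0 ≤ s) : ContinuousOn (cosKernel s) (Set.Ioi 0) :=
  (continuous_cos.abs.rpow_const fun _ => .inr hs).continuousOn.div (by fun_prop)
    fun _ hu => pow_ne_zero _ (ne_of_gt hu)

theorem rpow_le_quadratic {s y : ℝ} (hs : 36 / 25 ≤ s) (hy0 : 0 ≤ y) (hy1 : y ≤ 1) :
    y ^ s ≤ 14 / 25 * y + 11 / 25 * y ^ 2 := by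
  rcases hy0.eq_or_lt with rfl | hy
  · rw [zero_rpow (by linarith)]
    norm_num
  calc y ^ s ≤ y ^ (36 / 25 : ℝ) := rpow_le_rpow_of_exponent_ge hy hy1 hs
    _ = y ^ (14 / 25 : ℝ) * (y ^ 2) ^ (11 / 25 : ℝ) := by
        rw [← rpow_two, ← rpow_mul hy0, ← rpow_add hy]
        norm_num
    _ ≤ 14 / 25 * y + 11 / 25 * y ^ 2 :=
        geom_mean_le_arith_mean2_weighted (by norm_num) (by norm_num) hy0 (sq_nonneg y)
          (by norm_num)

theorem abs_cos_rpow_le {s : ℝ} (hs : 36 / 25 ≤ s) (u : ℝ) :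
    |cos u| ^ s ≤ 77 / 125 + 21 / 50 * cos (2 * u) := by
  have hquad := rpow_le_quadratic hs (abs_nonneg _) (abs_cos_le_one u)
  rw [cos_two_mul]
  nlinarith [sq_abs (cos u), sq_nonneg (|cos u| - 7 / 10)]

/-- A primitive of `cosTailDeriv` vanishing at infinity, obtained by integrating
`77 / 125 + 21 / 50 * cos (2 * u)` against `1 / u ^ 3` by parts. -/
noncomputable def cosTail (u : ℝ) : ℝ :=
  -(77 / 250) / u ^ 2 +
    21 / 50 * (sin (2 * u) / (2 * u ^ 3) - 3 / 4 * cos (2 * u) / u ^ 4 - 3 / 4 / u ^ 4)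

/-- A majorant of `cosKernel s` for `s ≥ 36 / 25` that has an elementary primitive. -/
noncomputable def cosTailDeriv (u : ℝ) : ℝ :=
  (77 / 125 + 21 / 50 * cos (2 * u)) / u ^ 3 + 63 / 50 * (1 + cos (2 * u)) / u ^ 5

theorem hasDerivAt_cosTail {u : ℝ} (hu : 0 < u) : HasDerivAt cosTail (cosTailDeriv u) u := by
  have hdouble : HasDerivAt (fun u : ℝ => 2 * u) 2 u := by
    simpa using (hasDerivAt_id u).const_mul 2
  have h := ((hasDerivAt_const u (-(77 / 250) : ℝ)).div (hasDerivAt_pow 2 u) (by positivity)).add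
    ((((hdouble.sin.div ((hasDerivAt_pow 3 u).const_mul 2) (by positivity)).sub
      ((hdouble.cos.const_mul (3 / 4)).div (hasDerivAt_pow 4 u) (by positivity))).sub
      ((hasDerivAt_const u (3 / 4 : ℝ)).div (hasDerivAt_pow 4 u) (by positivity))).const_mul
        (21 / 50))
  convert! h using 1
  rw [cosTailDeriv]
  push_cast
  field_simp
  ring

theorem cosKernel_le_cosTailDeriv {s : ℝ} (hs : 36 / 25 ≤ s) {u : ℝ} (hu : 0 < u) :
    cosKernel s u ≤ cosTailDeriv u := by
  have hnonneg : 0 ≤ 63 / 50 * (1 + cos (2 * u)) / u ^ 5 := by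
    have : 0 ≤ 1 + cos (2 * u) := by linarith [neg_one_le_cos (2 * u)]
    positivity
  refine le_add_of_le_of_nonneg ?_ hnonneg
  rw [cosKernel]
  gcongr
  exact abs_cos_rpow_le hs u

theorem tendsto_cosTail_atTop : Tendsto cosTail atTop (𝓝 0) := by
  have hpow (k : ℕ) (hk : k ≠ 0) : Tendsto (fun u : ℝ => (u ^ k)⁻¹) atTop (𝓝 0) :=
    (tendsto_pow_atTop hk).inv_tendsto_atTop
  have hbdd {f : ℝ → ℝ} (hf : ∀ u, |f u| ≤ 1) (k : ℕ) (hk : k ≠ 0) :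
      Tendsto (fun u : ℝ => (u ^ k)⁻¹ * f (2 * u)) atTop (𝓝 0) :=
    (hpow k hk).zero_mul_isBoundedUnder_le (isBoundedUnder_of ⟨1, fun u => hf _⟩)
  have hlim := ((hpow 2 two_ne_zero).const_mul (-(77 / 250))).add
    ((((hbdd abs_sin_le_one 3 three_ne_zero).const_mul (1 / 2)).sub
      ((hbdd abs_cos_le_one 4 four_ne_zero).const_mul (3 / 4))).sub
      ((hpow 4 four_ne_zero).const_mul (3 / 4)) |>.const_mul (21 / 50))
  simp only [mul_zero, sub_zero, add_zero] at hlim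
  refine hlim.congr fun u => ?_
  rw [cosTail]
  ring

theorem cosTail_three_pi_div_two :
    cosTail (3 * π / 2) = -(0.308 / (3 * π / 2) ^ 2) := by
  have hdouble : 2 * (3 * π / 2) = π + 2 * π := by ring
  rw [cosTail, hdouble, sin_add_two_pi, cos_add_two_pi, sin_pi, cos_pi]
  ring

theorem integrableOn_cosKernel_and_integral_le {s : ℝ} (hs : 36 / 25 ≤ s) :
    IntegrableOn (cosKernel s) (Set.Ioi (3 * π / 2)) ∧
      ∫ u in Set.Ioi (3 * π / 2), cosKernel s u ≤ 0.308 / (3 * π / 2) ^ 2 := by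
  have hpos {u : ℝ} (hu : u ∈ Set.Ioi (3 * π / 2)) : 0 < u := lt_trans (by positivity) hu
  have hle (u : ℝ) (hu : u ∈ Set.Ioi (3 * π / 2)) : cosKernel s u ≤ cosTailDeriv u :=
    cosKernel_le_cosTailDeriv hs (hpos hu)
  have hnonneg (u : ℝ) (hu : u ∈ Set.Ioi (3 * π / 2)) : 0 ≤ cosTailDeriv u :=
    (cosKernel_nonneg s (hpos hu).le).trans (hle u hu)
  have hcont : ContinuousWithinAt cosTail (Set.Ici (3 * π / 2)) (3 * π / 2) :=
    (hasDerivAt_cosTail (by positivity)).continuousAt.continuousWithinAt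
  have hderiv (u : ℝ) (hu : u ∈ Set.Ioi (3 * π / 2)) := hasDerivAt_cosTail (hpos hu)
  have hint_deriv : IntegrableOn cosTailDeriv (Set.Ioi (3 * π / 2)) :=
    integrableOn_Ioi_deriv_of_nonneg hcont hderiv hnonneg tendsto_cosTail_atTop
  have hint : IntegrableOn (cosKernel s) (Set.Ioi (3 * π / 2)) := by
    refine hint_deriv.mono' (measurable_cosKernel s).aestronglyMeasurable
      (ae_restrict_of_forall_mem measurableSet_Ioi fun u hu => ?_)
    rw [norm_of_nonneg (cosKernel_nonneg s (hpos hu).le)]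
    exact hle u hu
  refine ⟨hint, (setIntegral_mono_on hint hint_deriv measurableSet_Ioi hle).trans_eq ?_⟩
  rw [integral_Ioi_of_hasDerivAt_of_nonneg hcont hderiv hnonneg tendsto_cosTail_atTop,
    cosTail_three_pi_div_two]
  ring

end CosKernelTail

section CosKernelHump

theorem intervalIntegrable_cosKernel {s x y : ℝ} (hs : 0 ≤ s) (hx : 0 < x) (hy : 0 < y) :
    IntervalIntegrable (cosKernel s) volume x y :=
  intervalIntegrable_of_continuousOn_Ioi (continuousOn_cosKernel hs) hx hy

theorem continuous_cos_rpow {s : ℝ} (hs : 0 ≤ s) : Continuous fun a => cos a ^ s :=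
  continuous_cos.rpow_const fun _ => .inr hs

theorem cos_nonneg_of_mem_Icc_zero {a : ℝ} (ha : a ∈ Set.Icc 0 (π / 2)) : 0 ≤ cos a :=
  cos_nonneg_of_mem_Icc ⟨by linarith [ha.1, pi_pos], ha.2⟩

theorem intervalIntegrable_cos_rpow_mul_folded {s : ℝ} (hs : 0 ≤ s) :
    IntervalIntegrable (fun a => cos a ^ s * (1 / (π - a) ^ 3 + 1 / (π + a) ^ 3)) volume
      0 (π / 2) := by
  have hmem {a : ℝ} (ha : a ∈ Set.uIcc 0 (π / 2)) : 0 < π - a ∧ 0 < π + a := by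
    rw [Set.uIcc_of_le (by positivity)] at ha
    constructor <;> linarith [ha.1, ha.2, pi_pos]
  refine ((continuous_cos_rpow hs).continuousOn.mul (.add ?_ ?_)).intervalIntegrable
  · exact continuousOn_const.div (by fun_prop) fun a ha => pow_ne_zero _ (hmem ha).1.ne'
  · exact continuousOn_const.div (by fun_prop) fun a ha => pow_ne_zero _ (hmem ha).2.ne'

theorem integral_cosKernel_hump {s : ℝ} (hs : 0 ≤ s) :
    ∫ u in (π / 2)..(3 * π / 2), cosKernel s u =
      ∫ a in (0 : ℝ)..π / 2, cos a ^ s * (1 / (π - a) ^ 3 + 1 / (π + a) ^ 3) := by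
  have hpi := pi_pos
  have hleft : ∫ a in (0 : ℝ)..π / 2, cosKernel s (π - a) = ∫ u in (π / 2)..π, cosKernel s u := by
    rw [intervalIntegral.integral_comp_sub_left, sub_zero, sub_half]
  have hright : ∫ a in (0 : ℝ)..π / 2, cosKernel s (π + a) =
      ∫ u in π..(3 * π / 2), cosKernel s u := by
    rw [intervalIntegral.integral_comp_add_left, add_zero]
    congr 1
    ring
  have hint_left : IntervalIntegrable (fun a => cosKernel s (π - a)) volume 0 (π / 2) :=
    ((continuousOn_cosKernel hs).comp (by fun_prop) fun a ha => by
      rw [Set.uIcc_of_le (by positivity)] at ha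
      exact Set.mem_Ioi.2 (by linarith [ha.2])).intervalIntegrable
  have hint_right : IntervalIntegrable (fun a => cosKernel s (π + a)) volume 0 (π / 2) :=
    ((continuousOn_cosKernel hs).comp (by fun_prop) fun a ha => by
      rw [Set.uIcc_of_le (by positivity)] at ha
      exact Set.mem_Ioi.2 (by linarith [ha.1])).intervalIntegrable
  rw [← intervalIntegral.integral_add_adjacent_intervals
    (intervalIntegrable_cosKernel hs (by positivity) hpi)
    (intervalIntegrable_cosKernel hs hpi (by positivity)), ← hleft, ← hright,
    ← intervalIntegral.integral_add hint_left hint_right]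
  refine intervalIntegral.integral_congr fun a ha => ?_
  rw [Set.uIcc_of_le (by positivity)] at ha
  simp only [cosKernel, cos_pi_sub, cos_add, cos_pi, sin_pi, zero_mul, sub_zero, neg_one_mul,
    abs_neg, abs_of_nonneg (cos_nonneg_of_mem_Icc_zero ha)]
  ring

/-- A polynomial majorant of the folded kernel `1 / (π - a) ^ 3 + 1 / (π + a) ^ 3` on
`[0, π / 2]`; the lower coefficients are those of its Taylor expansion, rounded up. -/
noncomputable def humpMajorant (a : ℝ) : ℝ :=
  646 / 10000 + 393 / 10000 * a ^ 2 + 1 / 100 * a ^ 4 + 31 / 10000 * a ^ 6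

theorem div_add_div_cube_le_humpMajorant {a b : ℝ} (hb : b = 3.14159) (ha : a ^ 2 ≤ 2.4675)
    (hab : 0 < b - a) (hab' : 0 < b + a) :
    1 / (b - a) ^ 3 + 1 / (b + a) ^ 3 ≤ humpMajorant a := by
  have hfold : humpMajorant a * ((b - a) ^ 3 * (b + a) ^ 3) =
      (646 / 10000 + 393 / 10000 * a ^ 2 + 1 / 100 * (a ^ 2) ^ 2 + 31 / 10000 * (a ^ 2) ^ 3) *
        (b ^ 2 - a ^ 2) ^ 3 := by
    rw [humpMajorant]
    ring
  have hnum : 1 * (b + a) ^ 3 + (b - a) ^ 3 * 1 = 2 * b ^ 3 + 6 * b * a ^ 2 := by ring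
  rw [div_add_div _ _ (by positivity) (by positivity), div_le_iff₀ (by positivity), hfold, hnum, hb]
  have hr0 : 0 ≤ a ^ 2 := sq_nonneg a
  generalize a ^ 2 = r at ha hr0
  have hcubic : 0 ≤ 1.157 - 0.64912 * r + 0.08178 * r ^ 2 - 0.0031 * r ^ 3 := by
    nlinarith [mul_nonneg hr0 hr0, mul_nonneg (mul_nonneg hr0 hr0) (sub_nonneg.2 ha),
      mul_nonneg hr0 (sub_nonneg.2 ha), sq_nonneg (2.4675 - r)]
  nlinarith [mul_nonneg (pow_nonneg hr0 3) hcubic, pow_nonneg hr0 2, pow_nonneg hr0 3,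
    pow_nonneg hr0 4, pow_nonneg hr0 5]

theorem folded_le_humpMajorant {a : ℝ} (ha : a ∈ Set.Icc 0 (π / 2)) :
    1 / (π - a) ^ 3 + 1 / (π + a) ^ 3 ≤ humpMajorant a := by
  obtain ⟨ha0, ha1⟩ := ha
  have hpi : 3.14159 < π := by linarith [pi_gt_d6]
  have hale : a ≤ 1.5708 := by linarith [pi_lt_d4]
  have hpos : 0 < 3.14159 - a := by linarith
  have hpos' : 0 < 3.14159 + a := by linarith
  calc 1 / (π - a) ^ 3 + 1 / (π + a) ^ 3 ≤ 1 / (3.14159 - a) ^ 3 + 1 / (3.14159 + a) ^ 3 := by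
        gcongr
    _ ≤ humpMajorant a :=
        div_add_div_cube_le_humpMajorant rfl (by nlinarith) hpos hpos'

end CosKernelHump

section HumpBound

theorem cos_le_taylor_four {x : ℝ} (hx : 0 ≤ x) : cos x ≤ 1 - x ^ 2 / 2 + x ^ 4 / 24 := by
  have h := (cosTaylor_sinTaylor_alternating 2 hx).1
  norm_num [cosTaylor, sum_range_succ, Nat.factorial] at h
  linarith

/-- A polynomial majorant of `cos a ^ s` on `[0, π / 2]` for `s ≥ 36 / 25`. -/
noncomputable def cosPowMajorant (a : ℝ) : ℝ :=
  1 - 18 / 25 * a ^ 2 + 17 / 100 * a ^ 4 - 41 / 2500 * a ^ 6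

theorem cos_rpow_le_cosPowMajorant {s : ℝ} (hs : 36 / 25 ≤ s) {a : ℝ}
    (ha : a ∈ Set.Icc 0 (π / 2)) : cos a ^ s ≤ cosPowMajorant a := by
  have hcos := cos_le_taylor_four ha.1
  have hcos0 := cos_nonneg_of_mem_Icc_zero ha
  have hsq : a ^ 2 ≤ 2.5 := by nlinarith [ha.1, ha.2, pi_lt_d2]
  have height : a ^ 6 * a ^ 2 ≤ a ^ 6 * 2.5 := by gcongr
  calc cos a ^ s ≤ 14 / 25 * cos a + 11 / 25 * cos a ^ 2 :=
        rpow_le_quadratic hs hcos0 (cos_le_one a)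
    _ ≤ 14 / 25 * (1 - a ^ 2 / 2 + a ^ 4 / 24) + 11 / 25 * (1 - a ^ 2 / 2 + a ^ 4 / 24) ^ 2 := by
        gcongr
    _ ≤ cosPowMajorant a := by
        rw [cosPowMajorant]
        linarith [pow_nonneg ha.1 6]

theorem cosPowMajorant_nonneg {a : ℝ} (ha0 : 0 ≤ a) (ha : a ≤ 63 / 40) :
    0 ≤ cosPowMajorant a := by
  have hcubic : cosPowMajorant a =
      1 - 18 / 25 * a ^ 2 + 17 / 100 * (a ^ 2) ^ 2 - 41 / 2500 * (a ^ 2) ^ 3 := by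
    rw [cosPowMajorant]
    ring
  have hsq : a ^ 2 ≤ 2.5 := by nlinarith
  have h0 := sq_nonneg a
  rw [hcubic]
  generalize a ^ 2 = r at hsq h0
  nlinarith [mul_nonneg h0 (sub_nonneg.2 hsq), sq_nonneg (r - 2.5)]

/-- What is left of the hump after deducting the part of `comparisonWeight a / a ^ 3` that exceeds
`1 / a ^ 3`. -/
noncomputable def humpExcess (a : ℝ) : ℝ := humpMajorant a - (a / 60 + 6 / 1000 * a ^ 3)

theorem humpExcess_nonneg (a : ℝ) : 0 ≤ humpExcess a := by
  have hrest : 0 ≤ 31 / 10000 * a ^ 6 := by positivity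
  rw [humpExcess, humpMajorant]
  nlinarith [sq_nonneg (a - 1 / 4), sq_nonneg (a ^ 2 - a * 3 / 10)]

theorem continuous_humpExcess : Continuous humpExcess := by
  unfold humpExcess humpMajorant
  fun_prop

theorem integral_cosPowMajorant_mul_humpExcess_le :
    ∫ a in (0 : ℝ)..63 / 40, cosPowMajorant a * humpExcess a ≤ 1 / 12 - 1 / 2000 - 0.01388 := by
  have hexpand (a : ℝ) : cosPowMajorant a * humpExcess a =
      323 / 5000 - 1 / 60 * a ^ 1 - 1803 / 250000 * a ^ 2 + 3 / 500 * a ^ 3 - 3657 / 500000 * a ^ 4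
        + 223 / 150000 * a ^ 5 + 38039 / 25000000 * a ^ 6 - 7 / 9375 * a ^ 7
        - 29413 / 25000000 * a ^ 8 + 123 / 1250000 * a ^ 9 + 363 / 1000000 * a ^ 10
        - 1271 / 25000000 * a ^ 12 := by
    rw [cosPowMajorant, humpExcess, humpMajorant]
    ring
  simp only [hexpand]
  simp (disch := exact Continuous.intervalIntegrable (by fun_prop) _ _) only
    [intervalIntegral.integral_add, intervalIntegral.integral_sub,
      intervalIntegral.integral_const_mul, integral_pow, intervalIntegral.integral_const]
  norm_num

theorem integral_cos_rpow_mul_humpExcess_le {s : ℝ} (hs : 36 / 25 ≤ s) :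
    ∫ a in (0 : ℝ)..π / 2, cos a ^ s * humpExcess a ≤ 1 / 12 - 1 / 2000 - 0.01388 := by
  have hpi : π / 2 ≤ 63 / 40 := by linarith [pi_lt_d2]
  have hcont : Continuous fun a => cosPowMajorant a * humpExcess a := by
    unfold cosPowMajorant
    have := continuous_humpExcess
    fun_prop
  calc ∫ a in (0 : ℝ)..π / 2, cos a ^ s * humpExcess a
      ≤ ∫ a in (0 : ℝ)..π / 2, cosPowMajorant a * humpExcess a :=
        intervalIntegral.integral_mono_on (by positivity)
          (((continuous_cos_rpow (by linarith)).mul continuous_humpExcess).intervalIntegrable _ _)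
          (hcont.intervalIntegrable _ _) fun a ha =>
            mul_le_mul_of_nonneg_right (cos_rpow_le_cosPowMajorant hs ha) (humpExcess_nonneg a)
    _ ≤ ∫ a in (0 : ℝ)..63 / 40, cosPowMajorant a * humpExcess a :=
        intervalIntegral.integral_mono_interval le_rfl (by positivity) hpi
          (ae_restrict_of_forall_mem measurableSet_Ioc fun a ha =>
            mul_nonneg (cosPowMajorant_nonneg ha.1.le ha.2) (humpExcess_nonneg a))
          (hcont.intervalIntegrable _ _)
    _ ≤ 1 / 12 - 1 / 2000 - 0.01388 := integral_cosPowMajorant_mul_humpExcess_le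

theorem integral_cosKernel_Ioi_pi_div_two_le {s : ℝ} (hs : 36 / 25 ≤ s) :
    IntegrableOn (cosKernel s) (Set.Ioi (π / 2)) ∧
      ∫ u in Set.Ioi (π / 2), cosKernel s u ≤
        (∫ a in (0 : ℝ)..π / 2, cos a ^ s * (a / 60 + 6 / 1000 * a ^ 3)) + (1 / 12 - 1 / 2000) := by
  have hs0 : 0 ≤ s := by linarith
  have hle : π / 2 ≤ 3 * π / 2 := by linarith [pi_pos]
  obtain ⟨hint_tail, htail⟩ := integrableOn_cosKernel_and_integral_le hs
  have hint_hump := intervalIntegrable_cosKernel hs0 pi_div_two_pos (pi_div_two_pos.trans_le hle)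
  have hint : IntegrableOn (cosKernel s) (Set.Ioi (π / 2)) := by
    rw [← Set.Ioc_union_Ioi_eq_Ioi hle]
    exact ((intervalIntegrable_iff_integrableOn_Ioc_of_le hle).1 hint_hump).union hint_tail
  have hcont : Continuous fun a : ℝ => cos a ^ s * (a / 60 + 6 / 1000 * a ^ 3) :=
    (continuous_cos_rpow hs0).mul (by fun_prop)
  have hfold : (∫ a in (0 : ℝ)..π / 2, cos a ^ s * (1 / (π - a) ^ 3 + 1 / (π + a) ^ 3)) -
      ∫ a in (0 : ℝ)..π / 2, cos a ^ s * (a / 60 + 6 / 1000 * a ^ 3) ≤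
        ∫ a in (0 : ℝ)..π / 2, cos a ^ s * humpExcess a := by
    have hint_fold := intervalIntegrable_cos_rpow_mul_folded hs0
    rw [← intervalIntegral.integral_sub hint_fold (hcont.intervalIntegrable _ _)]
    refine intervalIntegral.integral_mono_on (by positivity)
      (hint_fold.sub (hcont.intervalIntegrable _ _))
      (((continuous_cos_rpow hs0).mul continuous_humpExcess).intervalIntegrable _ _) fun a ha => ?_
    rw [← mul_sub, humpExcess]
    have := rpow_nonneg (cos_nonneg_of_mem_Icc_zero ha) s
    gcongr
    exact folded_le_humpMajorant ha
  have htail_num : 0.308 / (3 * π / 2) ^ 2 ≤ 0.01388 := by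
    rw [div_le_iff₀ (by positivity)]
    nlinarith [pi_gt_d4]
  refine ⟨hint, ?_⟩
  rw [← intervalIntegral.integral_interval_add_Ioi hint hint_tail, integral_cosKernel_hump hs0]
  linarith [integral_cos_rpow_mul_humpExcess_le hs]

end HumpBound

section KernelComparison

open Filter Topology

theorem integral_cosKernel_add_eq_comparisonWeight {s ε : ℝ} (hs : 0 ≤ s) (hε0 : 0 < ε)
    (hε : ε ≤ π / 2) :
    (∫ u in ε..π / 2, cosKernel s u) +
        ∫ a in (0 : ℝ)..π / 2, cos a ^ s * (a / 60 + 6 / 1000 * a ^ 3) =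
      (∫ a in ε..π / 2, cos a ^ s * (comparisonWeight a / a ^ 3)) +
        ∫ a in (0 : ℝ)..ε, cos a ^ s * (a / 60 + 6 / 1000 * a ^ 3) := by
  have hcont : Continuous fun a : ℝ => cos a ^ s * (a / 60 + 6 / 1000 * a ^ 3) :=
    (continuous_cos_rpow hs).mul (by fun_prop)
  have hint (x y : ℝ) := hcont.intervalIntegrable (μ := volume) x y
  have hweight : ∫ a in ε..π / 2, cos a ^ s * (comparisonWeight a / a ^ 3) =
      (∫ u in ε..π / 2, cosKernel s u) +
        ∫ a in ε..π / 2, cos a ^ s * (a / 60 + 6 / 1000 * a ^ 3) := by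
    rw [← intervalIntegral.integral_add (intervalIntegrable_cosKernel hs hε0 pi_div_two_pos)
      (hint _ _)]
    refine intervalIntegral.integral_congr fun a ha => ?_
    rw [Set.uIcc_of_le hε] at ha
    have ha0 : a ≠ 0 := (hε0.trans_le ha.1).ne'
    simp only [cosKernel, comparisonWeight,
      abs_of_nonneg (cos_nonneg_of_mem_Icc_zero ⟨hε0.le.trans ha.1, ha.2⟩)]
    field_simp
    ring
  rw [hweight, ← intervalIntegral.integral_add_adjacent_intervals (hint 0 ε) (hint ε (π / 2))]
  ring

theorem integral_cos_rpow_mul_le_self {s ε : ℝ} (hs : 0 ≤ s) (hε0 : 0 ≤ ε) (hε : ε ≤ 1) :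
    ∫ a in (0 : ℝ)..ε, cos a ^ s * (a / 60 + 6 / 1000 * a ^ 3) ≤ ε := by
  have hcont : Continuous fun a : ℝ => cos a ^ s * (a / 60 + 6 / 1000 * a ^ 3) :=
    (continuous_cos_rpow hs).mul (by fun_prop)
  calc ∫ a in (0 : ℝ)..ε, cos a ^ s * (a / 60 + 6 / 1000 * a ^ 3) ≤ ∫ _ in (0 : ℝ)..ε, (1 : ℝ) := by
        refine intervalIntegral.integral_mono_on hε0 (hcont.intervalIntegrable _ _)
          intervalIntegrable_const fun a ⟨ha0, ha⟩ => ?_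
        have hcos := cos_nonneg_of_mem_Icc_zero ⟨ha0, by linarith [pi_gt_three]⟩
        have hcube : a ^ 3 ≤ 1 := pow_le_one₀ ha0 (ha.trans hε)
        exact mul_le_one₀ (rpow_le_one hcos (cos_le_one a) hs) (by positivity) (by linarith)
    _ = ε := by simp

theorem tendsto_exp_comparisonMap_sub (s : ℝ) :
    Tendsto (fun ε => exp (-(comparisonMap ε ^ 2) / 2 * s) / 12 - ε) (𝓝 0) (𝓝 (1 / 12)) := by
  have hcont := (hasDerivAt_comparisonMap le_rfl (pi_div_two_pos.le)).continuousAt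
  have h : ContinuousAt (fun ε => exp (-(comparisonMap ε ^ 2) / 2 * s) / 12 - ε) 0 := by fun_prop
  simpa [ContinuousAt, comparisonMap] using h

/-- For `ε = 0` both integrals diverge; the comparison survives the truncation
because of the margin `1 / 2000` in `integral_cosKernel_Ioi_pi_div_two_le`. -/
theorem exists_integral_cosKernel_le_integral_gaussKernel {s : ℝ} (hs : 36 / 25 ≤ s) :
    ∃ ε, 0 < ε ∧ ε ≤ π / 2 ∧ IntegrableOn (cosKernel s) (Set.Ioi ε) ∧
      ∫ u in Set.Ioi ε, cosKernel s u ≤ ∫ u in ε..π, gaussKernel s u := by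
  have hs0 : 0 ≤ s := by linarith
  obtain ⟨ε, ⟨hmargin, hε1⟩, hε0⟩ :=
    ((((tendsto_exp_comparisonMap_sub s).eventually_const_lt
      (show (1 / 12 - 1 / 2000 : ℝ) < 1 / 12 by norm_num)).and
        (eventually_lt_nhds one_pos)).filter_mono nhdsWithin_le_nhds |>.and
          (self_mem_nhdsWithin (s := Set.Ioi 0))).exists
  have hε : ε ≤ π / 2 := by linarith [pi_gt_three]
  obtain ⟨hint_far, hfar⟩ := integral_cosKernel_Ioi_pi_div_two_le hs
  have hint : IntegrableOn (cosKernel s) (Set.Ioi ε) := by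
    rw [← Set.Ioc_union_Ioi_eq_Ioi hε]
    exact ((intervalIntegrable_iff_integrableOn_Ioc_of_le hε).1
      (intervalIntegrable_cosKernel hs0 hε0 pi_div_two_pos)).union hint_far
  refine ⟨ε, hε0, hε, hint, ?_⟩
  rw [← intervalIntegral.integral_interval_add_Ioi hint hint_far]
  linarith [integral_cos_rpow_add_exp_le_integral_gaussKernel hs0 hε0 hε,
    integral_cosKernel_add_eq_comparisonWeight hs0 hε0 hε,
    integral_cos_rpow_mul_le_self hs0 hε0.le hε1.le]

end KernelComparison

section SingleCrossing

theorem exp_neg_sq_div_two_antitone {x y : ℝ} (hx : 0 ≤ x) (hxy : x ≤ y) :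
    exp (-(y ^ 2) / 2) ≤ exp (-(x ^ 2) / 2) := by
  gcongr

theorem abs_cos_le_exp_of_le_pi_div_two {u : ℝ} (hu0 : 0 ≤ u) (hu : u ≤ π / 2) :
    |cos u| ≤ exp (-(u ^ 2) / 2) := by
  rw [abs_of_nonneg (cos_nonneg_of_mem_Icc_zero ⟨hu0, hu⟩)]
  exact (cos_le_exp_comparisonMap hu0 hu).trans
    (exp_neg_sq_div_two_antitone hu0 (le_comparisonMap hu0 hu))

theorem exists_abs_cos_crossing_exp :
    ∃ c, π / 2 ≤ c ∧ c ≤ π ∧ (∀ u, 0 ≤ u → u ≤ c → |cos u| ≤ exp (-(u ^ 2) / 2)) ∧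
      ∀ u, c ≤ u → u ≤ π → exp (-(u ^ 2) / 2) ≤ |cos u| := by
  have hcont : ContinuousOn (fun u => exp (-(u ^ 2) / 2) + cos u) (Set.Icc (π / 2) π) := by
    fun_prop
  have hzero : (0 : ℝ) ∈ Set.Icc (exp (-(π ^ 2) / 2) + cos π)
      (exp (-((π / 2) ^ 2) / 2) + cos (π / 2)) := by
    rw [cos_pi, cos_pi_div_two, add_zero]
    have : exp (-(π ^ 2) / 2) ≤ 1 := exp_le_one_iff.2 (by nlinarith [pi_pos])
    exact ⟨by linarith, (exp_pos _).le⟩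
  obtain ⟨c, ⟨hc, hcpi⟩, hroot⟩ :=
    intermediate_value_Icc' (by linarith [pi_pos] : π / 2 ≤ π) hcont hzero
  have hc0 : 0 < c := pi_div_two_pos.trans_le hc
  have habs {u : ℝ} (hu : π / 2 ≤ u) (hupi : u ≤ π) : |cos u| = -cos u :=
    abs_of_nonpos (cos_nonpos_of_pi_div_two_le_of_le hu (by linarith [pi_pos]))
  refine ⟨c, hc, hcpi, fun u hu0 huc => ?_, fun u hcu hupi => ?_⟩
  · rcases le_total u (π / 2) with hu | hu
    · exact abs_cos_le_exp_of_le_pi_div_two hu0 hu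
    · rw [habs hu (huc.trans hcpi)]
      linarith [cos_le_cos_of_nonneg_of_le_pi hu0 hcpi huc, exp_neg_sq_div_two_antitone hu0 huc]
  · rw [habs (hc.trans hcu) hupi]
    linarith [cos_le_cos_of_nonneg_of_le_pi hc0.le hupi hcu, exp_neg_sq_div_two_antitone hc0.le hcu]

/-- The integrand `(exp (-s * u ^ 2 / 2) - |cos u| ^ s) * u ^ (-(p + 1))` that compares the
characteristic function of a Gaussian variable with a power of that of a sign. -/
noncomputable def gaussCosGap (s p u : ℝ) : ℝ :=
  (exp (-(u ^ 2) / 2 * s) - |cos u| ^ s) * u ^ (-(p + 1))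

theorem gaussCosGap_eq (s p : ℝ) {u : ℝ} (hu : 0 < u) :
    gaussCosGap s p u = u ^ (-(p - 2)) * (gaussKernel s u - cosKernel s u) := by
  have hsplit : u ^ (-(p + 1)) = u ^ (-(p - 2)) / u ^ 3 := by
    rw [← rpow_sub_natCast hu.ne']
    norm_num
    ring_nf
  rw [gaussCosGap, gaussKernel, cosKernel, hsplit]
  ring

theorem gaussCosGap_nonneg {s u : ℝ} (p : ℝ) (hs : 0 ≤ s) (hu : 0 ≤ u)
    (hle : |cos u| ≤ exp (-(u ^ 2) / 2)) : 0 ≤ gaussCosGap s p u := by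
  have h := rpow_le_rpow (abs_nonneg _) hle hs
  rw [← exp_mul] at h
  exact mul_nonneg (sub_nonneg.2 h) (by positivity)

theorem gaussKernel_sub_cosKernel_mul_le {s p c u : ℝ} (hs : 0 ≤ s) (hp : 2 ≤ p) (hc : 0 < c)
    (hu : 0 < u) (hle : u ≤ c → |cos u| ≤ exp (-(u ^ 2) / 2))
    (hge : c ≤ u → exp (-(u ^ 2) / 2) ≤ |cos u|) :
    c ^ (-(p - 2)) * (gaussKernel s u - cosKernel s u) ≤ gaussCosGap s p u := by
  have hsub : gaussKernel s u - cosKernel s u =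
      (exp (-(u ^ 2) / 2) ^ s - |cos u| ^ s) / u ^ 3 := by
    rw [gaussKernel, cosKernel, exp_mul, sub_div]
  rw [gaussCosGap_eq s p hu, hsub]
  rcases le_total u c with huc | huc
  · have := sub_nonneg.2 (rpow_le_rpow (abs_nonneg _) (hle huc) hs)
    exact mul_le_mul_of_nonneg_right (rpow_le_rpow_of_nonpos hu huc (by linarith)) (by positivity)
  · have := sub_nonpos.2 (rpow_le_rpow (exp_pos _).le (hge huc) hs)
    exact mul_le_mul_of_nonpos_right (rpow_le_rpow_of_nonpos hc huc (by linarith))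
      (div_nonpos_of_nonpos_of_nonneg this (by positivity))

theorem neg_cosKernel_mul_le {s p c u : ℝ} (hp : 2 ≤ p) (hc : 0 < c) (hcu : c ≤ u) :
    c ^ (-(p - 2)) * (0 - cosKernel s u) ≤ gaussCosGap s p u := by
  have hu : 0 < u := hc.trans_le hcu
  have hpow : u ^ (-(p - 2)) ≤ c ^ (-(p - 2)) := rpow_le_rpow_of_nonpos hc hcu (by linarith)
  have hcos := cosKernel_nonneg s hu.le
  calc c ^ (-(p - 2)) * (0 - cosKernel s u) ≤ u ^ (-(p - 2)) * (0 - cosKernel s u) :=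
        mul_le_mul_of_nonpos_right hpow (by linarith)
    _ ≤ u ^ (-(p - 2)) * (gaussKernel s u - cosKernel s u) := by
        have := gaussKernel_nonneg s hu.le
        gcongr
    _ = gaussCosGap s p u := (gaussCosGap_eq s p hu).symm

theorem indicator_gaussKernel_sub_cosKernel_mul_le {s p c ε u : ℝ} (hs : 0 ≤ s) (hp : 2 ≤ p)
    (hε : 0 < ε) (hc : 0 < c) (hcpi : c ≤ π)
    (hbelow : ∀ u, 0 ≤ u → u ≤ c → |cos u| ≤ exp (-(u ^ 2) / 2))
    (habove : ∀ u, c ≤ u → u ≤ π → exp (-(u ^ 2) / 2) ≤ |cos u|) (hu : u ∈ Set.Ioi ε) :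
    c ^ (-(p - 2)) * ((Set.Ioc ε π).indicator (gaussKernel s) u - cosKernel s u) ≤
      gaussCosGap s p u := by
  have hu0 : 0 < u := hε.trans hu
  by_cases hupi : u ≤ π
  · rw [Set.indicator_of_mem (Set.mem_Ioc.2 ⟨hu, hupi⟩)]
    exact gaussKernel_sub_cosKernel_mul_le hs hp hc hu0 (hbelow u hu0.le)
      fun hcu => habove u hcu hupi
  · rw [Set.indicator_of_notMem fun h => hupi h.2]
    exact neg_cosKernel_mul_le hp hc (hcpi.trans (le_of_not_ge hupi))

/-- The difference of the kernels changes sign once, at the crossing point `c`, so passing from the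
exponent `3` to the exponent `p + 1` amounts to a comparison with the weight
`c ^ (-(p - 2))` frozen at that point. -/
theorem integral_gaussCosGap_nonneg {s p : ℝ} (hs : 36 / 25 ≤ s) (hp : 2 ≤ p)
    (hint : IntegrableOn (gaussCosGap s p) (Set.Ioi 0)) :
    0 ≤ ∫ u in Set.Ioi (0 : ℝ), gaussCosGap s p u := by
  have hs0 : 0 ≤ s := by linarith
  obtain ⟨ε, hε0, hε, hint_cos, hle⟩ := exists_integral_cosKernel_le_integral_gaussKernel hs
  obtain ⟨c, hc, hcpi, hbelow, habove⟩ := exists_abs_cos_crossing_exp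
  have hc0 : 0 < c := pi_div_two_pos.trans_le hc
  have hεpi : ε ≤ π := (hε.trans hc).trans hcpi
  have hnear : 0 ≤ ∫ u in (0 : ℝ)..ε, gaussCosGap s p u :=
    intervalIntegral.integral_nonneg hε0.le fun u hu =>
      gaussCosGap_nonneg p hs0 hu.1 (hbelow u hu.1 ((hu.2.trans hε).trans hc))
  have hint_gauss : IntegrableOn (gaussKernel s) (Set.Ioc ε π) :=
    (intervalIntegrable_iff_integrableOn_Ioc_of_le hεpi).1
      (intervalIntegrable_of_continuousOn_Ioi (continuousOn_gaussKernel s) hε0 pi_pos)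
  have hint_trunc : IntegrableOn ((Set.Ioc ε π).indicator (gaussKernel s)) (Set.Ioi ε) :=
    ((integrable_indicator_iff measurableSet_Ioc).2 hint_gauss).integrableOn
  have hpoint (u : ℝ) (hu : u ∈ Set.Ioi ε) :=
    indicator_gaussKernel_sub_cosKernel_mul_le hs0 hp hε0 hc0 hcpi hbelow habove hu
  have hfar : 0 ≤ ∫ u in Set.Ioi ε, gaussCosGap s p u :=
    calc 0 ≤ c ^ (-(p - 2)) * ((∫ u in ε..π, gaussKernel s u) - ∫ u in Set.Ioi ε, cosKernel s u) :=
          mul_nonneg (by positivity) (sub_nonneg.2 hle)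
      _ = ∫ u in Set.Ioi ε, c ^ (-(p - 2)) *
            ((Set.Ioc ε π).indicator (gaussKernel s) u - cosKernel s u) := by
          rw [integral_const_mul, integral_sub hint_trunc hint_cos,
            setIntegral_indicator measurableSet_Ioc, Set.inter_eq_self_of_subset_right
              Set.Ioc_subset_Ioi_self, intervalIntegral.integral_of_le hεpi]
      _ ≤ ∫ u in Set.Ioi ε, gaussCosGap s p u :=
          setIntegral_mono_on ((hint_trunc.sub hint_cos).const_mul _)
            (hint.mono_set (Set.Ioi_subset_Ioi hε0.le)) measurableSet_Ioi hpoint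
  rw [← intervalIntegral.integral_interval_add_Ioi hint (hint.mono_set (Set.Ioi_subset_Ioi hε0.le))]
  exact add_nonneg hnear hfar

end SingleCrossing

section Scaling

theorem comp_mul_left_mul_rpow (F : ℝ → ℝ) (q : ℝ) {x t : ℝ} (hx : 0 < x) (ht : 0 < t) :
    F (x * t) * t ^ (-q) = x ^ q * (F (x * t) * (x * t) ^ (-q)) := by
  rw [mul_rpow hx.le ht.le, rpow_neg hx.le]
  field_simp

theorem integrableOn_Ioi_comp_mul_left_mul_rpow {F : ℝ → ℝ} {q x : ℝ} (hx : 0 < x)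
    (hF : IntegrableOn (fun u => F u * u ^ (-q)) (Set.Ioi 0)) :
    IntegrableOn (fun t => F (x * t) * t ^ (-q)) (Set.Ioi 0) := by
  rw [← mul_zero x] at hF
  exact IntegrableOn.congr_fun
    (((integrableOn_Ioi_comp_mul_left_iff _ 0 hx).2 hF).const_mul (x ^ q))
    (fun t ht => (comp_mul_left_mul_rpow F q hx ht).symm) measurableSet_Ioi

theorem integral_Ioi_comp_mul_left_mul_rpow (F : ℝ → ℝ) (p : ℝ) {x : ℝ} (hx : 0 < x) :
    ∫ t in Set.Ioi (0 : ℝ), F (x * t) * t ^ (-(p + 1)) =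
      x ^ p * ∫ u in Set.Ioi (0 : ℝ), F u * u ^ (-(p + 1)) := by
  rw [setIntegral_congr_fun measurableSet_Ioi fun t ht => comp_mul_left_mul_rpow F (p + 1) hx ht,
    integral_const_mul, integral_comp_mul_left_Ioi (fun u => F u * u ^ (-(p + 1))) 0 hx, mul_zero,
    smul_eq_mul, rpow_add_one hx.ne']
  field_simp

end Scaling

section CosRemainder

/-- The second-order Taylor remainder `cos x - 1 + x ^ 2 / 2` of the cosine, whose Mellin
transform represents the moment `|x| ^ p` for `2 < p < 4`. -/
noncomputable def cosRemainder (x : ℝ) : ℝ :=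
  cos x - 1 + x ^ 2 / 2

@[fun_prop]
theorem continuous_cosRemainder : Continuous cosRemainder := by
  unfold cosRemainder
  fun_prop

theorem cosRemainder_abs (x : ℝ) : cosRemainder |x| = cosRemainder x := by
  rw [cosRemainder, cosRemainder, cos_abs, sq_abs]

theorem cosRemainder_nonneg (x : ℝ) : 0 ≤ cosRemainder x := by
  unfold cosRemainder
  linarith [one_sub_sq_div_two_le_cos (x := x)]

theorem cosRemainder_le_pow_four {x : ℝ} (hx : 0 ≤ x) : cosRemainder x ≤ x ^ 4 := by
  have : 0 ≤ x ^ 4 := by positivity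
  unfold cosRemainder
  linarith [cos_le_taylor_four hx]

theorem cosRemainder_le_sq (x : ℝ) : cosRemainder x ≤ x ^ 2 := by
  unfold cosRemainder
  linarith [cos_le_one x, sq_nonneg x]

theorem norm_mul_rpow_le_of_abs_le_pow {y c u q : ℝ} {k : ℕ} (hu : 0 < u) (hy : |y| ≤ u ^ k)
    (hq : c = k + q) : ‖y * u ^ q‖ ≤ u ^ c := by
  rw [norm_mul, norm_eq_abs, norm_of_nonneg (by positivity), hq, rpow_add hu, rpow_natCast]
  gcongr

variable {p : ℝ}

theorem integrableOn_cosRemainder (hp : 2 < p) (hp4 : p < 4) :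
    IntegrableOn (fun t => cosRemainder t * t ^ (-(p + 1))) (Set.Ioi 0) := by
  have hmeas : Measurable fun t => cosRemainder t * t ^ (-(p + 1)) := by fun_prop
  rw [← Set.Ioc_union_Ioi_eq_Ioi zero_le_one]
  refine IntegrableOn.union ?_ ?_
  · have hpow : IntegrableOn (fun t : ℝ => t ^ (3 - p)) (Set.Ioc 0 1) :=
      (intervalIntegrable_iff_integrableOn_Ioc_of_le zero_le_one).1
        (intervalIntegral.intervalIntegrable_rpow' (by linarith))
    refine hpow.mono' hmeas.aestronglyMeasurable
      (ae_restrict_of_forall_mem measurableSet_Ioc fun t ht => ?_)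
    refine norm_mul_rpow_le_of_abs_le_pow (k := 4) ht.1 ?_ (by push_cast; ring)
    exact (abs_of_nonneg (cosRemainder_nonneg t)).trans_le (cosRemainder_le_pow_four ht.1.le)
  · have hpow : IntegrableOn (fun t : ℝ => t ^ (1 - p)) (Set.Ioi 1) :=
      integrableOn_Ioi_rpow_of_lt (by linarith) one_pos
    refine hpow.mono' hmeas.aestronglyMeasurable
      (ae_restrict_of_forall_mem measurableSet_Ioi fun t ht => ?_)
    refine norm_mul_rpow_le_of_abs_le_pow (k := 2) (one_pos.trans ht) ?_ (by push_cast; ring)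
    exact (abs_of_nonneg (cosRemainder_nonneg t)).trans_le (cosRemainder_le_sq t)

theorem cosRemainder_mul_eq_abs_mul (x : ℝ) {t : ℝ} (ht : 0 < t) :
    cosRemainder (x * t) = cosRemainder (|x| * t) := by
  rw [← cosRemainder_abs, abs_mul, abs_of_pos ht]

theorem integrableOn_cosRemainder_mul (hp : 2 < p) (hp4 : p < 4) (x : ℝ) :
    IntegrableOn (fun t => cosRemainder (x * t) * t ^ (-(p + 1))) (Set.Ioi 0) := by
  rcases eq_or_ne x 0 with rfl | hx
  · simp [cosRemainder]
  · refine (integrableOn_Ioi_comp_mul_left_mul_rpow (abs_pos.2 hx)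
      (integrableOn_cosRemainder hp hp4)).congr_fun (fun t ht => ?_) measurableSet_Ioi
    simp only [cosRemainder_mul_eq_abs_mul x ht]

/-- The constant `∫ t in (0, ∞), (cos t - 1 + t ^ 2 / 2) / t ^ (p + 1)` in the Fourier
representation of `|x| ^ p`. -/
noncomputable def momentConst (p : ℝ) : ℝ :=
  ∫ t in Set.Ioi (0 : ℝ), cosRemainder t * t ^ (-(p + 1))

theorem momentConst_pos (hp : 2 < p) (hp4 : p < 4) : 0 < momentConst p := by
  refine (setIntegral_pos_iff_support_of_nonneg_ae (ae_restrict_of_forall_mem measurableSet_Ioi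
    fun t (ht : 0 < t) => mul_nonneg (cosRemainder_nonneg t) (by positivity))
    (integrableOn_cosRemainder hp hp4)).2 ?_
  have hsub : Set.Ioi (3 : ℝ) ⊆
      Function.support (fun t => cosRemainder t * t ^ (-(p + 1))) ∩ Set.Ioi 0 := by
    intro t (ht : 3 < t)
    have ht0 : 0 < t := by linarith
    have hpos : 0 < cosRemainder t := by
      unfold cosRemainder
      nlinarith [neg_one_le_cos t]
    exact ⟨(mul_pos hpos (rpow_pos_of_pos ht0 _)).ne', ht0⟩
  exact lt_of_lt_of_le (by simp) (measure_mono hsub)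

theorem integral_cosRemainder_mul (hp : p ≠ 0) (x : ℝ) :
    ∫ t in Set.Ioi (0 : ℝ), cosRemainder (x * t) * t ^ (-(p + 1)) = momentConst p * |x| ^ p := by
  rcases eq_or_ne x 0 with rfl | hx
  · simp [cosRemainder, zero_rpow hp]
  · rw [momentConst, mul_comm, ← integral_Ioi_comp_mul_left_mul_rpow _ p (abs_pos.2 hx)]
    refine setIntegral_congr_fun measurableSet_Ioi fun t ht => ?_
    simp only [cosRemainder_mul_eq_abs_mul x ht]

end CosRemainder

section FourierRepresentation

variable {p : ℝ}

theorem integrableOn_rademacherMean_cosRemainder {ι : Type*} [Fintype ι] [DecidableEq ι]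
    (hp : 2 < p) (hp4 : p < 4) (s : Finset ι) (a : ι → ℝ) :
    IntegrableOn (fun t => rademacherMean s a (fun x => cosRemainder (x * t) * t ^ (-(p + 1))))
      (Set.Ioi 0) := by
  simp only [rademacherMean, Fintype.expect_eq_sum_div_card]
  exact (integrable_finsetSum _ fun ε _ => integrableOn_cosRemainder_mul hp hp4 _).div_const _

theorem integral_rademacherMean_cosRemainder {ι : Type*} [Fintype ι] [DecidableEq ι]
    (hp : 2 < p) (hp4 : p < 4) (s : Finset ι) (a : ι → ℝ) :
    ∫ t in Set.Ioi (0 : ℝ),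
        rademacherMean s a (fun x => cosRemainder (x * t) * t ^ (-(p + 1))) =
      momentConst p * rademacherMean s a (fun x => |x| ^ p) := by
  rw [← rademacherMean_const_mul]
  simp only [rademacherMean, Fintype.expect_eq_sum_div_card]
  rw [integral_div, integral_finsetSum _ fun ε _ => integrableOn_cosRemainder_mul hp hp4 _]
  simp only [integral_cosRemainder_mul (by linarith : p ≠ 0)]

theorem rademacherMean_cosRemainder_mul {ι : Type*} [Fintype ι] [DecidableEq ι] (s : Finset ι)
    (a : ι → ℝ) (t c : ℝ) :
    rademacherMean s a (fun x => cosRemainder (x * t) * c) =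
      (∏ i ∈ s, cos (t * a i) - 1 + t ^ 2 / 2 * ∑ i ∈ s, a i ^ 2) * c := by
  have h : (fun x => cosRemainder (x * t) * c) =
      fun x => c * (cos (t * x) + (-1 + t ^ 2 / 2 * x ^ 2)) := by
    funext x
    rw [cosRemainder, mul_comm x t]
    ring
  rw [h, rademacherMean_const_mul, rademacherMean_add, rademacherMean_add, rademacherMean_const,
    rademacherMean_const_mul, rademacherMean_sq, rademacherMean_cos]
  ring

theorem integral_cos_mul_gaussianReal (t : ℝ) (v : ℝ≥0) :
    ∫ y, cos (t * y) ∂gaussianReal 0 v = exp (-(t ^ 2) / 2 * v) := by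
  have hint : Integrable (fun y : ℝ => Complex.exp (t * y * Complex.I)) (gaussianReal 0 v) := by
    refine Integrable.of_bound (C := 1) (by fun_prop) (.of_forall fun y => ?_)
    rw [← Complex.ofReal_mul, Complex.norm_exp_ofReal_mul_I]
  have hre := congrArg Complex.re ((charFun_apply_real t).symm.trans
    (charFun_gaussianReal (μ := 0) (v := v) t))
  rw [← Complex.reCLM_apply, ← ContinuousLinearMap.integral_comp_comm _ hint] at hre
  simp only [Complex.reCLM_apply, ← Complex.ofReal_mul, Complex.exp_ofReal_mul_I_re] at hre
  rw [hre, show (((t * 0 : ℝ) : ℂ) * Complex.I - ((v : ℝ) : ℂ) * (t : ℂ) ^ 2 / 2) =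
    ((-(t ^ 2) / 2 * v : ℝ) : ℂ) by push_cast; ring, Complex.exp_ofReal_re]

theorem integral_cosRemainder_mul_gaussianReal (t c : ℝ) :
    ∫ y, cosRemainder (y * t) * c ∂gaussianReal 0 1 = (exp (-(t ^ 2) / 2) - 1 + t ^ 2 / 2) * c := by
  have hcos : Integrable (fun y => cos (t * y)) (gaussianReal 0 1) :=
    Integrable.of_bound (C := 1) (by fun_prop) (.of_forall fun y => abs_cos_le_one _)
  have hcos_sub : Integrable (fun y => cos (t * y) - 1) (gaussianReal 0 1) :=
    hcos.sub (integrable_const _)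
  have hsq : Integrable (fun y : ℝ => y ^ 2) (gaussianReal 0 1) := by
    simpa using integrable_abs_add_rpow_gaussianReal two_pos 0 1
  have h : (fun y => cosRemainder (y * t) * c) =
      fun y => (cos (t * y) - 1 + t ^ 2 / 2 * y ^ 2) * c := by
    funext y
    rw [cosRemainder, mul_comm y t]
    ring
  rw [h, integral_mul_const, integral_add hcos_sub (hsq.const_mul _),
    integral_sub hcos (integrable_const _), integral_const_mul, integral_sq_gaussianReal,
    integral_cos_mul_gaussianReal]
  simp

theorem integrable_cosRemainder_prod (hp : 2 < p) (hp4 : p < 4) :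
    Integrable (Function.uncurry fun y t => cosRemainder (y * t) * t ^ (-(p + 1)))
      ((gaussianReal 0 1).prod (volume.restrict (Set.Ioi (0 : ℝ)))) := by
  have hmeas : Measurable (Function.uncurry fun y t => cosRemainder (y * t) * t ^ (-(p + 1))) := by
    unfold Function.uncurry
    fun_prop
  refine (integrable_prod_iff hmeas.aestronglyMeasurable).2
    ⟨.of_forall fun y => integrableOn_cosRemainder_mul hp hp4 y, ?_⟩
  have hnorm (y : ℝ) : ∫ t in Set.Ioi (0 : ℝ), ‖cosRemainder (y * t) * t ^ (-(p + 1))‖ =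
      momentConst p * |y| ^ p := by
    rw [← integral_cosRemainder_mul (by linarith)]
    exact setIntegral_congr_fun measurableSet_Ioi fun t (ht : 0 < t) =>
      norm_of_nonneg (mul_nonneg (cosRemainder_nonneg _) (by positivity))
  simp only [Function.uncurry_apply_pair, hnorm]
  simpa using (integrable_abs_add_rpow_gaussianReal (by linarith : 0 < p) 0 1).const_mul _

theorem integrableOn_expRemainder (hp : 2 < p) (hp4 : p < 4) :
    IntegrableOn (fun t : ℝ => (exp (-(t ^ 2) / 2) - 1 + t ^ 2 / 2) * t ^ (-(p + 1)))
      (Set.Ioi 0) := by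
  simpa only [IntegrableOn, Function.uncurry_apply_pair, integral_cosRemainder_mul_gaussianReal]
    using (integrable_cosRemainder_prod hp hp4).integral_prod_right

theorem integral_expRemainder (hp : 2 < p) (hp4 : p < 4) :
    ∫ t in Set.Ioi (0 : ℝ), (exp (-(t ^ 2) / 2) - 1 + t ^ 2 / 2) * t ^ (-(p + 1)) =
      momentConst p * gaussianAbsMoment p := by
  simp only [← integral_cosRemainder_mul_gaussianReal]
  rw [← integral_integral_swap (integrable_cosRemainder_prod hp hp4), gaussianAbsMoment,
    ← integral_const_mul]
  simp only [integral_cosRemainder_mul (by linarith : p ≠ 0)]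

end FourierRepresentation

section SmallCoefficients

variable {p : ℝ}

theorem abs_rpow_sub_rpow_le {x y s : ℝ} (hx : x ∈ Set.Icc 0 1) (hy : y ∈ Set.Icc 0 1)
    (hs : 1 ≤ s) : |x ^ s - y ^ s| ≤ s * |x - y| := by
  refine (convex_Icc (0 : ℝ) 1).norm_image_sub_le_of_norm_hasDerivWithin_le
    (fun u _ => (hasDerivAt_rpow_const (.inr hs)).hasDerivWithinAt) (fun u hu => ?_) hy hx
  rw [norm_of_nonneg (mul_nonneg (by linarith) (rpow_nonneg hu.1 _))]
  exact mul_le_of_le_one_right (by linarith) (rpow_le_one hu.1 hu.2 (by linarith))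

theorem abs_exp_sub_abs_cos_rpow_le {s : ℝ} (hs : 1 ≤ s) (u : ℝ) :
    |exp (-(u ^ 2) / 2 * s) - |cos u| ^ s| ≤
      s * ((exp (-(u ^ 2) / 2) - 1 + u ^ 2 / 2) + cosRemainder u) := by
  have hexp : exp (-(u ^ 2) / 2) ∈ Set.Icc (0 : ℝ) 1 :=
    ⟨(exp_pos _).le, exp_le_one_iff.2 (by nlinarith)⟩
  have hexp_ge := add_one_le_exp (-(u ^ 2) / 2)
  have hcos := cosRemainder_nonneg u
  calc |exp (-(u ^ 2) / 2 * s) - |cos u| ^ s| ≤ s * |exp (-(u ^ 2) / 2) - (|cos u|)| := by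
        rw [exp_mul]
        exact abs_rpow_sub_rpow_le hexp ⟨abs_nonneg _, abs_cos_le_one u⟩ hs
    _ ≤ s * |exp (-(u ^ 2) / 2) - cos u| := by
        refine mul_le_mul_of_nonneg_left ?_ (by linarith)
        simpa only [abs_exp] using abs_abs_sub_abs_le (exp (-(u ^ 2) / 2)) (cos u)
    _ ≤ s * ((exp (-(u ^ 2) / 2) - 1 + u ^ 2 / 2) + cosRemainder u) := by
        unfold cosRemainder at *
        gcongr
        exact abs_le.2 ⟨by linarith, by linarith⟩

theorem integrableOn_gaussCosGap {s : ℝ} (hs : 1 ≤ s) (hp : 2 < p) (hp4 : p < 4) :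
    IntegrableOn (gaussCosGap s p) (Set.Ioi 0) := by
  have hmeas : Measurable (gaussCosGap s p) := by
    unfold gaussCosGap
    fun_prop
  refine (((integrableOn_expRemainder hp hp4).add
    (integrableOn_cosRemainder hp hp4)).const_mul s).mono' hmeas.aestronglyMeasurable
    (ae_restrict_of_forall_mem measurableSet_Ioi fun u (hu : 0 < u) => ?_)
  rw [gaussCosGap, norm_mul, norm_eq_abs, norm_of_nonneg (by positivity), Pi.add_apply, ← add_mul,
    ← mul_assoc]
  exact mul_le_mul_of_nonneg_right (abs_exp_sub_abs_cos_rpow_le hs u) (by positivity)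

/-- The integrand `b ^ 2 * (exp (-t ^ 2 / 2) - |cos (t * b)| ^ (1 / b ^ 2)) * t ^ (-(p + 1))`:
the contribution of the coefficient `b` to the difference between the Gaussian and the
Rademacher moment after the weighted AM-GM inequality. -/
noncomputable def coeffGap (p b t : ℝ) : ℝ :=
  b ^ 2 * ((exp (-(t ^ 2) / 2) - |cos (t * b)| ^ (1 / b ^ 2)) * t ^ (-(p + 1)))

theorem coeffGap_eq {b t : ℝ} (hb : b ≠ 0) (ht : 0 < t) :
    coeffGap p b t = b ^ 2 * (|b| ^ (p + 1) * gaussCosGap (1 / b ^ 2) p (|b| * t)) := by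
  have hbt : |b| * t = |t * b| := by rw [abs_mul, abs_of_pos ht, mul_comm]
  rw [gaussCosGap, ← comp_mul_left_mul_rpow
    (fun u => exp (-(u ^ 2) / 2 * (1 / b ^ 2)) - |cos u| ^ (1 / b ^ 2)) _ (abs_pos.2 hb) ht,
    coeffGap, hbt, cos_abs, sq_abs]
  congr 5
  field_simp

theorem integrableOn_coeffGap (hp : 2 < p) (hp4 : p < 4) {b : ℝ} (hb : b ^ 2 ≤ 1) :
    IntegrableOn (coeffGap p b) (Set.Ioi 0) := by
  rcases eq_or_ne b 0 with rfl | hb0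
  · simp [funext fun t => show coeffGap p 0 t = 0 by simp [coeffGap]]
  have hint : IntegrableOn (gaussCosGap (1 / b ^ 2) p) (Set.Ioi (|b| * 0)) := by
    rw [mul_zero]
    exact integrableOn_gaussCosGap ((one_le_div₀ (by positivity)).2 hb) hp hp4
  exact IntegrableOn.congr_fun
    ((((integrableOn_Ioi_comp_mul_left_iff _ 0 (abs_pos.2 hb0)).2 hint).const_mul _).const_mul _)
    (fun t ht => (coeffGap_eq hb0 ht).symm) measurableSet_Ioi

theorem integral_coeffGap_nonneg (hp : 2 < p) (hp4 : p < 4) {b : ℝ} (hb : b ^ 2 ≤ 25 / 36) :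
    0 ≤ ∫ t in Set.Ioi (0 : ℝ), coeffGap p b t := by
  rcases eq_or_ne b 0 with rfl | hb0
  · simp [coeffGap]
  have hs : 36 / 25 ≤ 1 / b ^ 2 := by
    rw [le_div_iff₀ (by positivity)]
    linarith
  have hgap := integral_gaussCosGap_nonneg hs hp.le
    (integrableOn_gaussCosGap (by linarith) hp hp4)
  rw [setIntegral_congr_fun measurableSet_Ioi fun t ht => coeffGap_eq hb0 ht, integral_const_mul,
    integral_const_mul, integral_comp_mul_left_Ioi _ 0 (abs_pos.2 hb0), mul_zero, smul_eq_mul]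
  positivity

variable {ι : Type*}

theorem prod_cos_le_sum_sq_mul_rpow {s : Finset ι} {a : ι → ℝ} (hsq : ∑ i ∈ s, a i ^ 2 = 1)
    (t : ℝ) : ∏ i ∈ s, cos (t * a i) ≤ ∑ i ∈ s, a i ^ 2 * |cos (t * a i)| ^ (1 / a i ^ 2) := by
  have hamgm := geom_mean_le_arith_mean_weighted s (fun i => a i ^ 2)
    (fun i => |cos (t * a i)| ^ (1 / a i ^ 2)) (fun i _ => by positivity) hsq
    (fun i _ => by positivity)
  refine (le_abs_self _).trans (le_of_eq_of_le ?_ hamgm)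
  rw [abs_prod]
  refine prod_congr rfl fun i _ => ?_
  rcases eq_or_ne (a i) 0 with h | h
  · simp [h]
  · rw [← rpow_mul (abs_nonneg _), one_div_mul_cancel (by positivity), rpow_one]

theorem sum_coeffGap_le {s : Finset ι} {a : ι → ℝ} (hsq : ∑ i ∈ s, a i ^ 2 = 1) {t : ℝ}
    (ht : 0 < t) :
    ∑ i ∈ s, coeffGap p (a i) t ≤
      (exp (-(t ^ 2) / 2) - ∏ i ∈ s, cos (t * a i)) * t ^ (-(p + 1)) := by
  have hsum : ∑ i ∈ s, coeffGap p (a i) t =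
      (exp (-(t ^ 2) / 2) - ∑ i ∈ s, a i ^ 2 * |cos (t * a i)| ^ (1 / a i ^ 2)) *
        t ^ (-(p + 1)) := by
    simp only [coeffGap, ← mul_assoc, mul_sub]
    rw [← sum_mul, sum_sub_distrib, ← sum_mul, hsq, one_mul]
  rw [hsum]
  gcongr
  exact prod_cos_le_sum_sq_mul_rpow hsq t

variable [Fintype ι] [DecidableEq ι]

theorem rademacherMean_abs_rpow_le_of_sq_le (hp : 2 < p) (hp4 : p < 4) {s : Finset ι} {a : ι → ℝ}
    (hsq : ∑ i ∈ s, a i ^ 2 = 1) (ha : ∀ i ∈ s, a i ^ 2 ≤ 25 / 36) :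
    rademacherMean s a (fun x => |x| ^ p) ≤ gaussianAbsMoment p := by
  have hint (i : ι) (hi : i ∈ s) :=
    integrableOn_coeffGap hp hp4 ((ha i hi).trans (by norm_num : (25 / 36 : ℝ) ≤ 1))
  have hrad := integrableOn_rademacherMean_cosRemainder hp hp4 s a
  have hgauss := integrableOn_expRemainder hp hp4
  have hle : 0 ≤ momentConst p * (gaussianAbsMoment p - rademacherMean s a (fun x => |x| ^ p)) :=
    calc 0 ≤ ∫ t in Set.Ioi (0 : ℝ), ∑ i ∈ s, coeffGap p (a i) t := by
          rw [integral_finsetSum _ hint]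
          exact sum_nonneg fun i hi => integral_coeffGap_nonneg hp hp4 (ha i hi)
      _ ≤ ∫ t in Set.Ioi (0 : ℝ), ((exp (-(t ^ 2) / 2) - 1 + t ^ 2 / 2) * t ^ (-(p + 1)) -
            rademacherMean s a (fun x => cosRemainder (x * t) * t ^ (-(p + 1)))) := by
          refine setIntegral_mono_on (integrable_finsetSum _ hint) (hgauss.sub hrad)
            measurableSet_Ioi fun t ht => (sum_coeffGap_le hsq ht).trans_eq ?_
          rw [rademacherMean_cosRemainder_mul, hsq]
          ring
      _ = momentConst p * (gaussianAbsMoment p - rademacherMean s a (fun x => |x| ^ p)) := by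
          rw [integral_sub hgauss hrad, integral_expRemainder hp hp4,
            integral_rademacherMean_cosRemainder hp hp4, mul_sub]
  exact sub_nonneg.1 (nonneg_of_mul_nonneg_right hle (momentConst_pos hp hp4))

end SmallCoefficients

section UnitVariance

variable {ι : Type*} [Fintype ι] [DecidableEq ι] {p : ℝ} {s : Finset ι}

theorem rademacherMean_abs_rpow_le_of_sum_sq_eq_one (hp : 2 < p) (hp4 : p < 4) {a : ι → ℝ}
    (hsq : ∑ i ∈ s, a i ^ 2 = 1) :
    rademacherMean s a (fun x => |x| ^ p) ≤ gaussianAbsMoment p := by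
  rcases le_or_gt ((25 / 36 : ℝ) ^ 2) (∑ i ∈ s, a i ^ 4) with hfour | hfour
  · exact rademacherMean_abs_rpow_le_of_le_sum_pow_four hp hp4.le hsq hfour
  · refine rademacherMean_abs_rpow_le_of_sq_le hp hp4 hsq fun i hi => ?_
    refine le_of_sq_le_sq ?_ (by norm_num)
    calc (a i ^ 2) ^ 2 = a i ^ 4 := by ring
      _ ≤ ∑ j ∈ s, a j ^ 4 := single_le_sum (f := fun j => a j ^ 4) (fun j _ => by positivity) hi
      _ ≤ (25 / 36) ^ 2 := hfour.le

theorem rademacherMean_abs_rpow_le (hp : 2 < p) (s : Finset ι) (a : ι → ℝ) :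
    rademacherMean s a (fun x => |x| ^ p) ≤ gaussianAbsMoment p * (∑ i ∈ s, a i ^ 2) ^ (p / 2) := by
  rcases le_or_gt 3 p with hp3 | hp3
  · exact rademacherMean_abs_rpow_le_of_three_le hp3 s a
  have hp0 : p ≠ 0 := by linarith
  rcases (sum_nonneg fun i _ => sq_nonneg (a i) : 0 ≤ ∑ i ∈ s, a i ^ 2).eq_or_lt with h0 | hpos
  · have ha (i : ι) (hi : i ∈ s) : a i = 0 :=
      pow_eq_zero_iff two_ne_zero |>.1 ((sum_eq_zero_iff_of_nonneg fun i _ => sq_nonneg _).1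
        h0.symm i hi)
    have hzero (ε : ι → ℤˣ) : ∑ i ∈ s, ε i • a i = 0 :=
      sum_eq_zero fun i hi => by rw [ha i hi, smul_zero]
    rw [← h0, zero_rpow (by positivity)]
    simp [rademacherMean, hzero, zero_rpow hp0]
  · set σ := √(∑ i ∈ s, a i ^ 2) with hσ
    have hσ0 : 0 < σ := sqrt_pos.2 hpos
    have hunit : ∑ i ∈ s, (σ⁻¹ • a) i ^ 2 = 1 := by
      simp only [Pi.smul_apply, smul_eq_mul, mul_pow]
      rw [← mul_sum, inv_pow, hσ, sq_sqrt hpos.le, inv_mul_cancel₀ hpos.ne']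
    have hσp : (∑ i ∈ s, a i ^ 2) ^ (p / 2) = σ ^ p := by
      rw [hσ, sqrt_eq_rpow, ← rpow_mul hpos.le]
      ring_nf
    calc rademacherMean s a (fun x => |x| ^ p)
        = rademacherMean s (σ⁻¹ • a) (fun x => |x| ^ p) * σ ^ p := by
          rw [rademacherMean_smul, mul_comm, ← rademacherMean_const_mul]
          simp only [abs_mul, abs_inv, abs_of_pos hσ0]
          congr! 2 with x
          rw [mul_rpow (by positivity) (abs_nonneg x), inv_rpow hσ0.le]
          field_simp
      _ ≤ gaussianAbsMoment p * σ ^ p := by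
          gcongr
          exact rademacherMean_abs_rpow_le_of_sum_sq_eq_one hp (by linarith) hunit
      _ = gaussianAbsMoment p * (∑ i ∈ s, a i ^ 2) ^ (p / 2) := by rw [hσp]

end UnitVariance

section SymmetricSums

theorem rpow_half_le_rpow_mul {x y p : ℝ} (hp : 2 ≤ p) (hx : 0 ≤ x) (hxy : x ≤ y) :
    x ^ (p / 2) ≤ y ^ (p / 2 - 1) * x := by
  rw [← sub_add_cancel (p / 2) 1, rpow_add_of_nonneg hx (by linarith) zero_le_one, rpow_one,
    sub_add_cancel]
  gcongr
  linarith

variable {Ω : Type*} [MeasurableSpace Ω] {P : Measure Ω} {p : ℝ}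

theorem integrable_abs_rpow_of_memLp [IsFiniteMeasure P] {Y : Ω → ℝ} {q : ℝ} (hq : 0 ≤ q)
    (hY : MemLp Y (ENNReal.ofReal q) P) : Integrable (fun ω => |Y ω| ^ q) P := by
  simpa only [ENNReal.toReal_ofReal hq, norm_eq_abs] using hY.integrable_norm_rpow'

theorem integral_abs_rpow_le_integral_sq_rpow [IsProbabilityMeasure P] {Y : Ω → ℝ}
    (hY : MemLp Y 2 P) (hp0 : 0 ≤ p) (hp2 : p ≤ 2) :
    ∫ ω, |Y ω| ^ p ∂P ≤ (∫ ω, Y ω ^ 2 ∂P) ^ (p / 2) := by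
  have hpow (ω : Ω) : |Y ω| ^ p = (Y ω ^ 2) ^ (p / 2) := by
    rw [← sq_abs, ← rpow_natCast, ← rpow_mul (abs_nonneg _)]
    push_cast
    ring_nf
  have hint : Integrable (fun ω => |Y ω| ^ p) P :=
    integrable_abs_rpow_of_memLp hp0 (hY.mono_exponent (ENNReal.ofReal_le_ofNat.2 hp2))
  simp only [hpow] at hint ⊢
  exact (concaveOn_rpow (by linarith) (by linarith)).le_map_integral
    (continuous_rpow_const (by linarith)).continuousOn isClosed_Ici
    (.of_forall fun ω => sq_nonneg (Y ω)) hY.integrable_sq hint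

theorem memLp_of_abs_le [IsFiniteMeasure P] {Y : Ω → ℝ} (hY : AEMeasurable Y P) {c : ℝ}
    (hbound : ∀ᵐ ω ∂P, |Y ω| ≤ c) (q : ENNReal) : MemLp Y q P :=
  (memLp_top_of_bound hY.aestronglyMeasurable c hbound).mono_exponent le_top

variable {ι : Type*} [Fintype ι] {Y : ι → Ω → ℝ}

theorem identDistrib_sum_sum_units_smul (hindep : iIndepFun Y P)
    (hsymm : ∀ i, IdentDistrib (Y i) (fun ω => -Y i ω) P P) (ε : ι → ℤˣ) :
    IdentDistrib (fun ω => ∑ i, Y i ω) (fun ω => ∑ i, ε i • Y i ω) P P := by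
  have hmarginal (i : ι) : IdentDistrib (Y i) (fun ω => ε i • Y i ω) P P := by
    rcases Int.units_eq_one_or (ε i) with h | h
    · simpa only [h, one_smul] using IdentDistrib.refl (hsymm i).aemeasurable_fst
    · simpa only [h, Units.neg_smul, one_smul] using hsymm i
  exact (IdentDistrib.pi hmarginal hindep (hindep.comp (fun i y => ε i • y) fun i => by fun_prop)
    ).comp (u := fun y : ι → ℝ => ∑ i, y i) (by fun_prop)

theorem integral_comp_sum_eq_integral_rademacherMean [DecidableEq ι] (hindep : iIndepFun Y P)
    (hsymm : ∀ i, IdentDistrib (Y i) (fun ω => -Y i ω) P P) {φ : ℝ → ℝ} (hφ : Measurable φ)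
    (hint : Integrable (fun ω => φ (∑ i, Y i ω)) P) :
    ∫ ω, φ (∑ i, Y i ω) ∂P = ∫ ω, rademacherMean univ (fun i => Y i ω) φ ∂P := by
  have hident (ε : ι → ℤˣ) : IdentDistrib (fun ω => φ (∑ i, Y i ω))
      (fun ω => φ (∑ i, ε i • Y i ω)) P P :=
    (identDistrib_sum_sum_units_smul hindep hsymm ε).comp hφ
  simp only [rademacherMean, Fintype.expect_eq_sum_div_card]
  rw [integral_div, integral_finsetSum _ fun ε _ => (hident ε).integrable_iff.1 hint]
  simp [← (hident _).integral_eq]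

variable {v : ι → ℝ} {τ : ℝ}

theorem integral_sq_sum_le (hindep : iIndepFun Y P)
    (hsymm : ∀ i, IdentDistrib (Y i) (fun ω => -Y i ω) P P) (hY : ∀ i, MemLp (Y i) 2 P)
    (hsq : ∀ i, ∫ ω, Y i ω ^ 2 ∂P ≤ τ * v i ^ 2) :
    ∫ ω, (∑ i, Y i ω) ^ 2 ∂P ≤ τ * ∑ i, v i ^ 2 := by
  classical
  calc ∫ ω, (∑ i, Y i ω) ^ 2 ∂P = ∫ ω, ∑ i, Y i ω ^ 2 ∂P := by
        rw [integral_comp_sum_eq_integral_rademacherMean hindep hsymm (φ := fun x => x ^ 2)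
          (by fun_prop) (memLp_finsetSum _ fun i _ => hY i).integrable_sq]
        simp only [rademacherMean_sq]
    _ = ∑ i, ∫ ω, Y i ω ^ 2 ∂P := integral_finsetSum _ fun i _ => (hY i).integrable_sq
    _ ≤ τ * ∑ i, v i ^ 2 := by
        rw [mul_sum]
        exact sum_le_sum fun i _ => hsq i

theorem rademacherMean_abs_rpow_le_mul_sum_sq [DecidableEq ι] (hp : 2 < p) {a : ι → ℝ}
    (ha : ∀ i, |a i| ≤ |v i|) :
    rademacherMean univ a (fun x => |x| ^ p) ≤
      gaussianAbsMoment p * ((∑ i, v i ^ 2) ^ (p / 2 - 1) * ∑ i, a i ^ 2) :=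
  (rademacherMean_abs_rpow_le hp _ _).trans <| mul_le_mul_of_nonneg_left
    (rpow_half_le_rpow_mul hp.le (sum_nonneg fun _ _ => sq_nonneg _)
      (sum_le_sum fun i _ => sq_le_sq.2 (ha i)))
    (gaussianAbsMoment_nonneg p)

theorem integral_abs_sum_rpow_le (hp : 2 < p) (hindep : iIndepFun Y P)
    (hsymm : ∀ i, IdentDistrib (Y i) (fun ω => -Y i ω) P P)
    (hbound : ∀ i, ∀ᵐ ω ∂P, |Y i ω| ≤ |v i|) (hsq : ∀ i, ∫ ω, Y i ω ^ 2 ∂P ≤ τ * v i ^ 2) :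
    ∫ ω, |∑ i, Y i ω| ^ p ∂P ≤ gaussianAbsMoment p * τ * (∑ i, v i ^ 2) ^ (p / 2) := by
  classical
  have := hindep.isProbabilityMeasure
  have hmem (i : ι) (q : ENNReal) : MemLp (Y i) q P :=
    memLp_of_abs_le (hsymm i).aemeasurable_fst (hbound i) q
  have hint : Integrable (fun ω => |∑ i, Y i ω| ^ p) P :=
    integrable_abs_rpow_of_memLp (by linarith) (memLp_finsetSum _ fun i _ => hmem i _)
  have hcont : Continuous fun x : ℝ => |x| ^ p :=
    continuous_abs.rpow_const fun _ => .inr (by linarith)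
  have hint_sq (i : ι) : Integrable (fun ω => Y i ω ^ 2) P := (hmem i 2).integrable_sq
  set V := ∑ i, v i ^ 2
  have hV : 0 ≤ V := sum_nonneg fun i _ => sq_nonneg _
  have hmoment := gaussianAbsMoment_nonneg p
  calc ∫ ω, |∑ i, Y i ω| ^ p ∂P
      = ∫ ω, rademacherMean univ (fun i => Y i ω) (fun x => |x| ^ p) ∂P :=
        integral_comp_sum_eq_integral_rademacherMean hindep hsymm hcont.measurable hint
    _ ≤ ∫ ω, gaussianAbsMoment p * (V ^ (p / 2 - 1) * ∑ i, Y i ω ^ 2) ∂P :=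
        integral_mono_of_nonneg
          (.of_forall fun ω => expect_nonneg fun ε _ => by positivity)
          (((integrable_finsetSum _ fun i _ => hint_sq i).const_mul _).const_mul _)
          ((ae_all_iff.2 hbound).mono fun ω => rademacherMean_abs_rpow_le_mul_sum_sq hp)
    _ = gaussianAbsMoment p * (V ^ (p / 2 - 1) * ∑ i, ∫ ω, Y i ω ^ 2 ∂P) := by
        rw [integral_const_mul, integral_const_mul, integral_finsetSum _ fun i _ => hint_sq i]
    _ ≤ gaussianAbsMoment p * (V ^ (p / 2 - 1) * (τ * V)) := by
        gcongr
        rw [mul_sum]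
        exact sum_le_sum fun i _ => hsq i
    _ = gaussianAbsMoment p * τ * V ^ (p / 2) := by
        rw [mul_left_comm (V ^ _), ← rpow_add_one' hV (by linarith), sub_add_cancel, mul_assoc]

theorem rpow_integral_abs_sum_le_of_le_two (hp0 : 0 < p) (hp2 : p ≤ 2) (hτ : 0 ≤ τ)
    (hindep : iIndepFun Y P) (hsymm : ∀ i, IdentDistrib (Y i) (fun ω => -Y i ω) P P)
    (hY : ∀ i, MemLp (Y i) 2 P) (hsq : ∀ i, ∫ ω, Y i ω ^ 2 ∂P ≤ τ * v i ^ 2) :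
    (∫ ω, |∑ i, Y i ω| ^ p ∂P) ^ (1 / p) ≤
      τ ^ ((1 : ℝ) / 2) * (∑ i, v i ^ 2) ^ ((1 : ℝ) / 2) := by
  have := hindep.isProbabilityMeasure
  have hV : 0 ≤ ∑ i, v i ^ 2 := sum_nonneg fun i _ => sq_nonneg _
  calc (∫ ω, |∑ i, Y i ω| ^ p ∂P) ^ (1 / p)
      ≤ ((∫ ω, (∑ i, Y i ω) ^ 2 ∂P) ^ (p / 2)) ^ (1 / p) := by
        gcongr
        exact integral_abs_rpow_le_integral_sq_rpow (memLp_finsetSum _ fun i _ => hY i) hp0.le hp2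
    _ ≤ ((τ * ∑ i, v i ^ 2) ^ (p / 2)) ^ (1 / p) := by
        gcongr
        exact integral_sq_sum_le hindep hsymm hY hsq
    _ = τ ^ ((1 : ℝ) / 2) * (∑ i, v i ^ 2) ^ ((1 : ℝ) / 2) := by
        rw [← rpow_mul (by positivity), ← mul_rpow hτ hV]
        field_simp

theorem rpow_integral_abs_sum_le_of_two_lt (hp : 2 < p) (hτ : 0 ≤ τ) (hindep : iIndepFun Y P)
    (hsymm : ∀ i, IdentDistrib (Y i) (fun ω => -Y i ω) P P)
    (hbound : ∀ i, ∀ᵐ ω ∂P, |Y i ω| ≤ |v i|) (hsq : ∀ i, ∫ ω, Y i ω ^ 2 ∂P ≤ τ * v i ^ 2) :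
    (∫ ω, |∑ i, Y i ω| ^ p ∂P) ^ (1 / p) ≤
      gaussianAbsMoment p ^ (1 / p) * τ ^ (1 / p) * (∑ i, v i ^ 2) ^ ((1 : ℝ) / 2) := by
  have hV : 0 ≤ ∑ i, v i ^ 2 := sum_nonneg fun i _ => sq_nonneg _
  have hmoment := gaussianAbsMoment_nonneg p
  calc (∫ ω, |∑ i, Y i ω| ^ p ∂P) ^ (1 / p)
      ≤ (gaussianAbsMoment p * τ * (∑ i, v i ^ 2) ^ (p / 2)) ^ (1 / p) := by
        gcongr
        exact integral_abs_sum_rpow_le hp hindep hsymm hbound hsq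
    _ = gaussianAbsMoment p ^ (1 / p) * τ ^ (1 / p) * (∑ i, v i ^ 2) ^ ((1 : ℝ) / 2) := by
        rw [mul_rpow (by positivity) (by positivity), mul_rpow hmoment hτ, ← rpow_mul hV]
        field_simp

end SymmetricSums

/-- The optimal constant `B_p` in the upper Khintchine inequality. -/
noncomputable def khintchineConst (p : ℝ) : ℝ :=
  max (max 1 (2 ^ ((1 : ℝ) / 2 - 1 / p))) (2 ^ ((1 : ℝ) / 2) * (Gamma ((p + 1) / 2) / √π) ^ (1 / p))

theorem one_le_khintchineConst (p : ℝ) : 1 ≤ khintchineConst p :=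
  (le_max_left _ _).trans (le_max_left _ _)

theorem gaussianAbsMoment_rpow_le_khintchineConst {p : ℝ} (hp : 0 < p) :
    gaussianAbsMoment p ^ (1 / p) ≤ khintchineConst p := by
  have : 0 < Gamma ((p + 1) / 2) := Gamma_pos_of_pos (by linarith)
  rw [gaussianAbsMoment_eq (by linarith), mul_rpow (by positivity) (by positivity),
    ← rpow_mul two_pos.le, div_mul_div_comm, mul_one, mul_comm 2 p, ← div_div, div_self hp.ne']
  exact le_max_right _ _

section ProductSpace

variable {ι X : Type*} [Fintype ι] [MeasurableSpace X] {μ : Measure X} [IsProbabilityMeasure μ]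
  {f : X → ℝ}

theorem identDistrib_comp_eval (hf : Measurable f) (i : ι) :
    IdentDistrib (fun x : ι → X => f (x i)) f (Measure.pi fun _ => μ) μ :=
  have hmap := measurePreserving_eval (fun _ : ι => μ) i
  (⟨hmap.aemeasurable, aemeasurable_id, by rw [Measure.map_id, hmap.map_eq]⟩ :
    IdentDistrib (Function.eval i) id (Measure.pi fun _ => μ) μ).comp hf

theorem identDistrib_comp_eval_mul_neg (hf : Measurable f)
    (hsymm : IdentDistrib f (fun x => -f x) μ μ) (i : ι) (c : ℝ) :
    IdentDistrib (fun x : ι → X => f (x i) * c) (fun x => -(f (x i) * c))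
      (Measure.pi fun _ => μ) (Measure.pi fun _ => μ) := by
  have h := ((identDistrib_comp_eval (μ := μ) hf i).trans hsymm).trans
    (identDistrib_comp_eval hf.neg i).symm
  simpa only [Function.comp_def, Pi.neg_apply, neg_mul] using
    h.comp (u := fun y => y * c) (by fun_prop)

theorem integral_comp_eval_mul_sq (hf : Measurable f) (i : ι) (c : ℝ) :
    ∫ x : ι → X, (f (x i) * c) ^ 2 ∂(Measure.pi fun _ => μ) = (∫ x, f x ^ 2 ∂μ) * c ^ 2 := by
  simp only [mul_pow]
  rw [integral_mul_const, (identDistrib_comp_eval (hf.pow_const 2) i).integral_eq]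

theorem iIndepFun_comp_eval_mul (hf : Measurable f) (v : ι → ℝ) :
    iIndepFun (fun i (x : ι → X) => f (x i) * v i) (Measure.pi fun _ => μ) :=
  iIndepFun_pi (X := fun i x => f x * v i) fun i => (hf.mul_const (v i)).aemeasurable

end ProductSpace

section OddIndicator

variable {X : Type*} {neg : X → X} {S : Set X}

/-- The function `f = 1_S - 1_{-S}` of the paper, with `x ↦ -x` replaced by a map `neg`. -/
noncomputable def oddIndicator (neg : X → X) (S : Set X) (x : X) : ℝ :=
  S.indicator (fun _ => 1) x - (neg ⁻¹' S).indicator (fun _ => 1) x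

theorem oddIndicator_comp (hneg : Function.Involutive neg) (x : X) :
    oddIndicator neg S (neg x) = -oddIndicator neg S x := by
  have hpre : neg ⁻¹' (neg ⁻¹' S) = S := by
    rw [← Set.preimage_comp, hneg.comp_self, Set.preimage_id]
  have hcomp (T : Set X) :
      T.indicator (fun _ => (1 : ℝ)) (neg x) = (neg ⁻¹' T).indicator (fun _ => 1) x := rfl
  rw [oddIndicator, hcomp, hcomp, hpre, oddIndicator, neg_sub]

theorem abs_oddIndicator_mul_le (neg : X → X) (S : Set X) (x : X) (c : ℝ) :
    |oddIndicator neg S x * c| ≤ |c| := by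
  by_cases h : x ∈ S <;> by_cases h' : neg x ∈ S <;> simp [oddIndicator, h, h']

theorem oddIndicator_sq (hdisj : S ∩ neg ⁻¹' S = ∅) (x : X) :
    oddIndicator neg S x ^ 2 =
      S.indicator (fun _ => (1 : ℝ)) x + (neg ⁻¹' S).indicator (fun _ => 1) x := by
  have hx : x ∉ S ∩ neg ⁻¹' S := hdisj ▸ Set.notMem_empty x
  by_cases h : x ∈ S <;> by_cases h' : neg x ∈ S
  · exact absurd ⟨h, h'⟩ hx
  all_goals simp [oddIndicator, h, h']

variable [MeasurableSpace X] {μ : Measure X}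

theorem measurable_oddIndicator (hneg : Measurable neg) (hS : MeasurableSet S) :
    Measurable (oddIndicator neg S) :=
  (measurable_const.indicator hS).sub (measurable_const.indicator (hneg hS))

theorem integral_oddIndicator_sq [IsFiniteMeasure μ] (hneg : MeasurePreserving neg μ μ)
    (hS : MeasurableSet S) (hdisj : S ∩ neg ⁻¹' S = ∅) :
    ∫ x, oddIndicator neg S x ^ 2 ∂μ = 2 * μ.real S := by
  have hS' : MeasurableSet (neg ⁻¹' S) := hneg.measurable hS
  simp only [oddIndicator_sq hdisj]
  rw [integral_add ((integrable_const 1).indicator hS) ((integrable_const 1).indicator hS'),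
    integral_indicator_const _ hS, integral_indicator_const _ hS',
    hneg.measureReal_preimage hS.nullMeasurableSet, smul_eq_mul, mul_one, two_mul]

theorem identDistrib_neg_of_comp_eq_neg {f : X → ℝ} (hf : Measurable f)
    (hneg : MeasurePreserving neg μ μ) (hodd : ∀ x, f (neg x) = -f x) :
    IdentDistrib f (fun x => -f x) μ μ := by
  have h : IdentDistrib id neg μ μ :=
    ⟨aemeasurable_id, hneg.aemeasurable, by rw [Measure.map_id, hneg.map_eq]⟩
  simpa only [Function.comp_def, id, hodd] using h.comp hf

variable {ι : Type*} [Fintype ι] [IsProbabilityMeasure μ]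

theorem identDistrib_oddIndicator_mul_neg (hinv : Function.Involutive neg)
    (hneg : MeasurePreserving neg μ μ) (hS : MeasurableSet S) (i : ι) (c : ℝ) :
    IdentDistrib (fun x : ι → X => oddIndicator neg S (x i) * c)
      (fun x => -(oddIndicator neg S (x i) * c)) (Measure.pi fun _ => μ) (Measure.pi fun _ => μ) :=
  have hf := measurable_oddIndicator hneg.measurable hS
  identDistrib_comp_eval_mul_neg hf
    (identDistrib_neg_of_comp_eq_neg hf hneg (oddIndicator_comp hinv)) i c

theorem integral_oddIndicator_mul_sq (hneg : MeasurePreserving neg μ μ) (hS : MeasurableSet S)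
    (hdisj : S ∩ neg ⁻¹' S = ∅) (i : ι) (c : ℝ) :
    ∫ x : ι → X, (oddIndicator neg S (x i) * c) ^ 2 ∂(Measure.pi fun _ => μ) =
      2 * μ.real S * c ^ 2 := by
  rw [integral_comp_eval_mul_sq (measurable_oddIndicator hneg.measurable hS),
    integral_oddIndicator_sq hneg hS hdisj]

end OddIndicator

end Khintchine

theorem stmt16_general {ι Ω : Type*} [Fintype ι] [MeasurableSpace Ω] {P : Measure Ω}
    {Y : ι → Ω → ℝ} {v : ι → ℝ} {τ p : ℝ} (hp : 0 < p) (hτ : 0 ≤ τ)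
    (hindep : ProbabilityTheory.iIndepFun Y P)
    (hsymm : ∀ i, ProbabilityTheory.IdentDistrib (Y i) (fun ω => -Y i ω) P P)
    (hbound : ∀ i, ∀ᵐ ω ∂P, |Y i ω| ≤ |v i|) (hsq : ∀ i, ∫ ω, Y i ω ^ 2 ∂P ≤ τ * v i ^ 2) :
    (∫ ω, |∑ i, Y i ω| ^ p ∂P) ^ (1 / p) ≤
      Khintchine.khintchineConst p * max (τ ^ (1 / p)) (τ ^ ((1 : ℝ) / 2)) *
        (∑ i, v i ^ 2) ^ ((1 : ℝ) / 2) := by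
  have := hindep.isProbabilityMeasure
  have hconst := Khintchine.one_le_khintchineConst p
  rcases le_or_gt p 2 with hp2 | hp2
  · have hY (i : ι) : MemLp (Y i) 2 P :=
      Khintchine.memLp_of_abs_le (hsymm i).aemeasurable_fst (hbound i) 2
    refine (Khintchine.rpow_integral_abs_sum_le_of_le_two hp hp2 hτ hindep hsymm hY hsq).trans ?_
    gcongr
    exact (le_max_right _ _).trans (le_mul_of_one_le_left (by positivity) hconst)
  · refine (Khintchine.rpow_integral_abs_sum_le_of_two_lt hp2 hτ hindep hsymm hbound hsq).trans ?_
    gcongr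
    · exact Khintchine.gaussianAbsMoment_rpow_le_khintchineConst hp
    · exact le_max_left _ _

theorem stmt16 {X : Type*} [MeasurableSpace X] (μ : Measure X) [IsProbabilityMeasure μ]
    (neg : X → X) (hneg_inv : Function.Involutive neg) (hneg_mp : MeasurePreserving neg μ μ)
    (S : Set X) (hS : MeasurableSet S) (hdisj : S ∩ neg ⁻¹' S = ∅)
    (n : ℕ) (v : Fin n → ℝ) (p : ℝ) (hp : 1 ≤ p) :
    (∫ x : Fin n → X,
        |∑ i, (Set.indicator S (fun _ => (1 : ℝ)) (x i) -
            Set.indicator (neg ⁻¹' S) (fun _ => (1 : ℝ)) (x i)) * v i| ^ p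
        ∂(Measure.pi fun _ => μ)) ^ (1 / p) ≤
      (max (max 1 (2 ^ ((1 : ℝ) / 2 - 1 / p)))
          (2 ^ ((1 : ℝ) / 2) * (Real.Gamma ((p + 1) / 2) / Real.sqrt Real.pi) ^ (1 / p))) *
        max ((2 * (μ S).toReal) ^ ((1 : ℝ) / p)) ((2 * (μ S).toReal) ^ ((1 : ℝ) / 2)) *
        (∑ i, v i ^ 2) ^ ((1 : ℝ) / 2) :=
  stmt16_general (zero_lt_one.trans_le hp) (by positivity)
    (Khintchine.iIndepFun_comp_eval_mul
      (Khintchine.measurable_oddIndicator hneg_mp.measurable hS) v)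
    (fun i => Khintchine.identDistrib_oddIndicator_mul_neg hneg_inv hneg_mp hS i (v i))
    (fun i => .of_forall fun x => Khintchine.abs_oddIndicator_mul_le neg S (x i) (v i))
    fun i => (Khintchine.integral_oddIndicator_mul_sq hneg_mp hS hdisj i (v i)).le
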